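/- arXiv:1402.0401 — 2 statements merged into one kernel-verified Lean document; each statement's English description precedes it below -/
import Mathlib

section
/- Let G be a finitely generated group having a free subgroup of finite index. Then there exists a constant M > 0 such that for every endomorphism φ of G, the periodic subgroup Per(φ) = ⋃_{n ≥ 1} Fix(φⁿ) is generated by at most M elements. -/
/-- The periodic set `Per(φ) = ⋃_{n ≥ 1} Fix(φⁿ)` of an endomorphism `φ`. -/
def perSet {G : Type*} [Group G] (φ : Monoid.End G) : Set G :=
  {x | ∃ n, 1 ≤ n ∧ (φ ^ n) x = x}

/-!
For an injective endomorphism `φ` of the free group `F` on a finite set `X`, let `F` act on the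
sequences in `F` up to bounded distance along a nonprincipal ultrafilter by
`g • (u k) = (φ ^ k g * u k)`. These classes are the points of a tree-like object (a pretree with
medians), and the stabilizer of the class of the constant sequence `1` is `Per(φ)`, because balls
in `F` are finite. The stabilizer of a direction is commutative: its elements shift a common long
segment. This suffices for an inequality of Gaboriau–Levitt type: the valences minus two over the
hull of a finite set sum to `-2`, and comparing the hull of `W` with the hulls of the sets
`W ∩ x⁻¹ W` for `x ∈ X` shows that the Schreier graph of an orbit has finite subgraphs of cyclomatic
number at most `|X|`. The edges of the graph of directions which enter this comparison are at most
as many as the directions, since an orbit of directions has commutative stabilizers and therefore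
an equivariant choice of an infinite word at each of its vertices: every edge is crossed by the
first letter of the word at one of its ends. Hence `Per(φ)` has at most `|X|` generators.

If `φ` is not injective, then `Per(φ)` lies in the image of `φ`, which by the Hopf property is free
of smaller rank. In the virtually free case `φ` preserves a fully invariant free subgroup of finite
index, and coset representatives account for the rest of `Per(φ)`.
-/

/-- `H` can be generated by at most `n` elements. -/
def GeneratedByAtMost {G : Type*} [Group G] (H : Subgroup G) (n : ℕ) : Prop :=
  ∃ S : Finset G, Subgroup.closure (S : Set G) = H ∧ S.card ≤ n

/-! ### Median pretrees and the Euler characteristic of hulls -/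

/-- A pretree in which every triple has a median: a set with a betweenness relation
behaving like that of the points of an `ℝ`-tree. `Between a y b` says that `y` lies on the arc
from `a` to `b`, endpoints included. -/
structure MedianPretree (T : Type*) where
  Between : T → T → T → Prop
  left : ∀ a b, Between a a b
  symm : ∀ {a y b}, Between a y b → Between b y a
  left_or_right : ∀ {a y c} (b), Between a y c → Between a y b ∨ Between b y c
  antisymm : ∀ {a y b}, Between a y b → Between a b y → y = b
  exists_median : ∀ a b c, ∃ m, Between a m b ∧ Between a m c ∧ Between b m c

namespace MedianPretree

variable {T : Type*} (S : MedianPretree T) {W W' : Finset T} {a b q y z z' : T}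

theorem right (a b : T) : S.Between a b b := S.symm (S.left b a)

theorem eq_of_between_self (h : S.Between a y a) : y = a := S.antisymm h (S.left a y)

theorem trans_left (h₁ : S.Between a z y) (h₂ : S.Between a y b) : S.Between a z b := by
  rcases S.left_or_right b h₁ with h | h
  · exact h
  · have hyz : y = z := by
      rcases S.left_or_right z h₂ with h₃ | h₃
      · exact S.antisymm h₃ h₁
      · exact S.antisymm (S.symm h₃) h
    rwa [← hyz]

theorem trans_right (h₁ : S.Between a z y) (h₂ : S.Between a y b) : S.Between z y b := by
  rcases S.left_or_right z h₂ with h | h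
  · rw [S.antisymm h h₁]
    exact S.left _ _
  · exact h

theorem eq_of_between_of_between (h : S.Between a q b) (ha : S.Between q y a)
    (hb : S.Between q y b) : y = q := by
  rcases S.left_or_right y h with h' | h'
  · exact S.antisymm (S.symm ha) h'
  · exact S.antisymm (S.symm hb) (S.symm h')

/-- The hull of a finite set: the union of the arcs between its points. -/
def hull (W : Finset T) : Set T := {y | ∃ a ∈ W, ∃ b ∈ W, S.Between a y b}

theorem hull_mono (h : W ⊆ W') : S.hull W ⊆ S.hull W' :=
  fun _ ⟨a, ha, b, hb, hy⟩ => ⟨a, h ha, b, h hb, hy⟩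

theorem subset_hull : (W : Set T) ⊆ S.hull W := fun y hy => ⟨y, hy, y, hy, S.left _ _⟩

theorem hull_empty : S.hull ∅ = ∅ := by simp [hull]

theorem hull_singleton (a : T) : S.hull {a} = {a} := by
  refine Set.Subset.antisymm ?_ (by simpa using S.subset_hull (W := {a}))
  rintro y ⟨b, hb, c, hc, h⟩
  obtain rfl := Finset.mem_singleton.1 hb
  obtain rfl := Finset.mem_singleton.1 hc
  exact S.eq_of_between_self h

theorem hull_insert [DecidableEq T] (hb : b ∈ S.hull W) : S.hull (insert b W) = S.hull W := by
  have mem_hull_of_between : ∀ y, ∀ a ∈ W, S.Between a y b → y ∈ S.hull W := by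
    intro y a ha h
    obtain ⟨c, hc, d, hd, hcd⟩ := hb
    by_cases hyc : S.Between b y c
    · by_cases hyd : S.Between b y d
      · rw [S.eq_of_between_of_between hcd hyc hyd]
        exact ⟨c, hc, d, hd, hcd⟩
      · exact ⟨a, ha, d, hd, (S.left_or_right d h).resolve_right fun h' => hyd (S.symm h')⟩
    · exact ⟨a, ha, c, hc, (S.left_or_right c h).resolve_right fun h' => hyc (S.symm h')⟩
  refine Set.Subset.antisymm ?_ (S.hull_mono (Finset.subset_insert _ _))
  rintro y ⟨a, ha, c, hc, h⟩
  obtain rfl | haW := Finset.mem_insert.1 ha <;> obtain rfl | hcW := Finset.mem_insert.1 hc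
  · rwa [S.eq_of_between_self h]
  · exact mem_hull_of_between y c hcW (S.symm h)
  · exact mem_hull_of_between y a haW h
  · exact ⟨a, haW, c, hcW, h⟩

theorem exists_mem_hull_forall_between (hW : W.Nonempty) (w : T) :
    ∃ q ∈ S.hull W, ∀ a ∈ W, S.Between w q a := by
  induction hW using Finset.Nonempty.cons_induction with
  | singleton a => exact ⟨a, by simp [hull_singleton], by simp [S.right]⟩
  | cons b W hb hW ih =>
    obtain ⟨q, hq, hqW⟩ := ih
    obtain ⟨m, hwq, hwb, hqb⟩ := S.exists_median w q b
    refine ⟨m, ?_, fun a ha => ?_⟩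
    · by_cases hmq : m = q
      · exact hmq ▸ S.hull_mono (Finset.subset_cons hb) hq
      · obtain ⟨a, ha⟩ := hW
        refine ⟨a, by simp [ha], b, by simp, (S.left_or_right a hqb).resolve_left fun h => ?_⟩
        exact hmq (S.antisymm (S.symm h) (S.symm (S.trans_right hwq (hqW a ha))))
    · rcases Finset.mem_cons.1 ha with rfl | ha
      · exact hwb
      · exact S.trans_left hwq (hqW a ha)

/-- The direction at `y` towards `z ≠ y`: the base point `y` together with the component of `z`
in the complement of `y`. -/
def dir (y z : T) : T × Set T := (y, {z' | z' ≠ y ∧ ¬ S.Between z y z'})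

theorem dir_eq_dir_iff (hz' : z' ≠ y) :
    S.dir y z = S.dir y z' ↔ ¬ S.Between z y z' := by
  refine ⟨fun h => ?_, fun h => Prod.ext rfl <| Set.ext fun w => and_congr_right fun _ =>
    not_congr ⟨fun hw => ?_, fun hw => ?_⟩⟩
  · have hmem : z' ∈ (S.dir y z').2 := ⟨hz', fun h' => hz' (S.eq_of_between_self h').symm⟩
    rw [← h] at hmem
    exact hmem.2
  · exact (S.left_or_right z' hw).resolve_left h
  · exact (S.left_or_right z hw).resolve_left fun h' => h (S.symm h')

open Classical in
/-- The directions at `y` pointing towards some element of `W`. -/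
noncomputable def dirs (W : Finset T) (y : T) : Finset (T × Set T) :=
  {z ∈ W | z ≠ y}.image (S.dir y)

theorem mem_dirs {d : T × Set T} : d ∈ S.dirs W y ↔ ∃ z ∈ W, z ≠ y ∧ S.dir y z = d := by
  simp [dirs, and_assoc]

theorem fst_eq_of_mem_dirs {d : T × Set T} (hd : d ∈ S.dirs W y) : d.1 = y := by
  obtain ⟨z, -, -, rfl⟩ := S.mem_dirs.1 hd
  rfl

theorem dirs_mono (h : W ⊆ W') (y : T) : S.dirs W y ⊆ S.dirs W' y := by
  intro d hd
  obtain ⟨z, hz, hzd⟩ := S.mem_dirs.1 hd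
  exact S.mem_dirs.2 ⟨z, h hz, hzd⟩

theorem dirs_singleton_self (a : T) : S.dirs {a} a = ∅ := by simp [dirs]

theorem dirs_insert_self [DecidableEq T] (W : Finset T) (b : T) :
    S.dirs (insert b W) b = S.dirs W b := by
  ext d
  simp [mem_dirs]

theorem dirs_insert_of_ne [DecidableEq T] (W : Finset T) (h : b ≠ y) :
    S.dirs (insert b W) y = insert (S.dir y b) (S.dirs W y) := by
  ext d
  simp [mem_dirs, h, eq_comm]

theorem dir_mem_dirs_of_mem_hull (hq : q ∈ S.hull W) (h : q ≠ y) : S.dir y q ∈ S.dirs W y := by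
  obtain ⟨a, ha, b, hb, hab⟩ := hq
  have mem_of_not_between {c : T} (hc : c ∈ W) (hqc : ¬ S.Between q y c) :
      S.dir y q ∈ S.dirs W y := by
    have hcy : c ≠ y := fun h' => hqc (h' ▸ S.right _ _)
    exact S.mem_dirs.2 ⟨c, hc, hcy, (S.dir_eq_dir_iff h).2 fun h' => hqc (S.symm h')⟩
  by_cases hqa : S.Between q y a
  · exact mem_of_not_between hb fun hqb => h (S.eq_of_between_of_between hab hqa hqb).symm
  · exact mem_of_not_between ha hqa

theorem dirs_insert_of_dir_eq [DecidableEq T] (hq : q ∈ S.hull W) (hby : b ≠ y) (hqy : q ≠ y)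
    (h : S.dir y b = S.dir y q) : S.dirs (insert b W) y = S.dirs W y := by
  rw [S.dirs_insert_of_ne W hby, h, Finset.insert_eq_of_mem (S.dir_mem_dirs_of_mem_hull hq hqy)]

/-- The valence of `y` in the hull of `W`; it is `1` when `y` lies outside the hull of `W ≠ ∅`. -/
noncomputable def valence (W : Finset T) (y : T) : ℕ := (S.dirs W y).card

theorem valence_mono (h : W ⊆ W') (y : T) : S.valence W y ≤ S.valence W' y :=
  Finset.card_le_card (S.dirs_mono h y)

theorem two_le_valence (hy : y ∈ S.hull W) (hyW : y ∉ W) : 2 ≤ S.valence W y := by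
  obtain ⟨a, ha, b, hb, h⟩ := hy
  have hay : a ≠ y := fun h => hyW (h ▸ ha)
  have hby : b ≠ y := fun h => hyW (h ▸ hb)
  refine Finset.one_lt_card.2 ⟨_, S.mem_dirs.2 ⟨a, ha, hay, rfl⟩, _,
    S.mem_dirs.2 ⟨b, hb, hby, rfl⟩, fun h' => (S.dir_eq_dir_iff hby).1 h' h⟩

theorem valence_eq_one_of_notMem_hull (hW : W.Nonempty) (hy : y ∉ S.hull W) :
    S.valence W y = 1 := by
  have hne : ∀ z ∈ W, z ≠ y := fun z hz h => hy (h ▸ S.subset_hull hz)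
  obtain ⟨a, ha⟩ := hW
  refine Finset.card_eq_one.2 ⟨S.dir y a, Finset.ext fun d => ?_⟩
  rw [mem_dirs, Finset.mem_singleton]
  constructor
  · rintro ⟨z, hz, -, rfl⟩
    exact (S.dir_eq_dir_iff (hne a ha)).2 fun h => hy ⟨z, hz, a, ha, h⟩
  · rintro rfl
    exact ⟨a, ha, hne a ha, rfl⟩

theorem valence_insert_of_between [DecidableEq T] (hqW : ∀ a ∈ W, S.Between b q a) (hbq : b ≠ q) :
    S.valence (insert b W) q = S.valence W q + 1 := by
  have hnew : S.dir q b ∉ S.dirs W q := by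
    rw [mem_dirs]
    rintro ⟨z, hz, -, h⟩
    exact (S.dir_eq_dir_iff hbq).1 h (S.symm (hqW z hz))
  rw [valence, valence, S.dirs_insert_of_ne W hbq, Finset.card_insert_of_notMem hnew]

open Classical in
/-- The function on `T` supported on the hull of `W` with value `valence - 2` there. Its sum is
minus twice the Euler characteristic of the hull, regarded as a finite tree. -/
noncomputable def eulerWeight (W : Finset T) (y : T) : ℤ :=
  if y ∈ S.hull W then S.valence W y - 2 else 0

theorem support_eulerWeight_subset : Function.support (S.eulerWeight W) ⊆ S.hull W := by
  intro y hy
  by_contra h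
  exact hy (if_neg h)

theorem eulerWeight_singleton [DecidableEq T] (a : T) :
    S.eulerWeight {a} = Pi.single a (-2) := by
  ext y
  by_cases hy : y = a
  · subst hy
    simp [eulerWeight, hull_singleton, valence, dirs_singleton_self]
  · simp [eulerWeight, hull_singleton, hy]

theorem eulerWeight_insert_of_mem [DecidableEq T] (hb : b ∈ S.hull W) :
    S.eulerWeight (insert b W) = S.eulerWeight W := by
  ext y
  suffices S.dirs (insert b W) y = S.dirs W y by
    rw [eulerWeight, eulerWeight, S.hull_insert hb, valence, valence, this]
  by_cases hby : b = y
  · subst hby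
    exact S.dirs_insert_self _ _
  · exact S.dirs_insert_of_dir_eq hb hby hby rfl

theorem not_between_of_mem_hull (hqW : ∀ a ∈ W, S.Between b q a) (hy : y ∈ S.hull W)
    (hyq : y ≠ q) : ¬ S.Between b y q := by
  intro h
  obtain ⟨a, ha, c, hc, hac⟩ := hy
  rcases S.left_or_right q hac with h' | h'
  · exact hyq (S.antisymm h' (S.symm (S.trans_right h (hqW a ha))))
  · exact hyq (S.antisymm (S.symm h') (S.symm (S.trans_right h (hqW c hc))))

theorem valence_insert_of_mem_hull [DecidableEq T] (hqW : ∀ a ∈ W, S.Between b q a)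
    (hq : q ∈ S.hull W) (hb : b ∉ S.hull W) (hy : y ∈ S.hull W) (hyq : y ≠ q) :
    S.valence (insert b W) y = S.valence W y := by
  have hby : b ≠ y := fun h => hb (h ▸ hy)
  rw [valence, valence, S.dirs_insert_of_dir_eq hq hby hyq.symm]
  exact (S.dir_eq_dir_iff hyq.symm).2 (S.not_between_of_mem_hull hqW hy hyq)

theorem eulerWeight_insert_of_notMem_of_ne [DecidableEq T] (hW : W.Nonempty) (hy : y ∉ S.hull W)
    (hby : b ≠ y) : S.eulerWeight (insert b W) y = 0 := by
  rw [eulerWeight]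
  split_ifs with hy'
  · have hle : S.valence (insert b W) y ≤ 2 := by
      have hval := S.valence_eq_one_of_notMem_hull hW hy
      rw [valence] at hval ⊢
      rw [S.dirs_insert_of_ne W hby]
      exact (Finset.card_insert_le _ _).trans_eq (congrArg (· + 1) hval)
    have hge : 2 ≤ S.valence (insert b W) y := by
      refine S.two_le_valence hy' fun h => ?_
      rcases Finset.mem_insert.1 h with h | h
      · exact hby h.symm
      · exact hy (S.subset_hull h)
    omega
  · rfl

/-- Adding a point `b` outside the hull glues on the arc from `b` to its projection `q`. -/
theorem eulerWeight_insert_of_notMem [DecidableEq T] (hqW : ∀ a ∈ W, S.Between b q a)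
    (hq : q ∈ S.hull W) (hb : b ∉ S.hull W) :
    S.eulerWeight (insert b W) = S.eulerWeight W + Pi.single q 1 + Pi.single b (-1) := by
  have hW : W.Nonempty := let ⟨a, ha, _⟩ := hq; ⟨a, ha⟩
  have hbq : b ≠ q := fun h => hb (h ▸ hq)
  have hsub : S.hull W ⊆ S.hull (insert b W) := S.hull_mono (Finset.subset_insert _ _)
  ext y
  by_cases hyb : y = b
  · subst hyb
    have hy : y ∈ S.hull (insert y W) := S.subset_hull (by simp)
    have hval := S.valence_eq_one_of_notMem_hull hW hb
    rw [valence, ← dirs_insert_self] at hval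
    simp [eulerWeight, hy, hb, valence, hval, hbq]
  by_cases hyW : y ∈ S.hull W
  · by_cases hyq : y = q
    · subst hyq
      simp only [eulerWeight, hsub hyW, hyW, ↓reduceIte, S.valence_insert_of_between hqW hbq,
        Pi.add_apply, Pi.single_eq_same, Pi.single_eq_of_ne hyb, Nat.cast_add, Nat.cast_one]
      ring
    · simp [eulerWeight, hsub hyW, hyW, S.valence_insert_of_mem_hull hqW hq hb hyW hyq, hyb, hyq]
  · have hyq : y ≠ q := fun h => hyW (h ▸ hq)
    rw [S.eulerWeight_insert_of_notMem_of_ne hW hyW (Ne.symm hyb)]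
    simp [eulerWeight, hyW, hyb, hyq]

theorem hasSum_eulerWeight (hW : W.Nonempty) : HasSum (S.eulerWeight W) (-2) := by
  classical
  induction hW using Finset.Nonempty.cons_induction with
  | singleton a => exact S.eulerWeight_singleton a ▸ hasSum_pi_single a (-2)
  | cons b W hbW hW ih =>
    rw [Finset.cons_eq_insert]
    by_cases hb : b ∈ S.hull W
    · rwa [S.eulerWeight_insert_of_mem hb]
    · obtain ⟨q, hq, hqW⟩ := S.exists_mem_hull_forall_between hW b
      rw [S.eulerWeight_insert_of_notMem hqW hq hb]
      exact (ih.add (hasSum_pi_single q 1)).add (hasSum_pi_single b (-1))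

theorem finite_support_eulerWeight (W : Finset T) :
    (Function.support (S.eulerWeight W)).Finite := by
  obtain rfl | hW := W.eq_empty_or_nonempty
  · exact Set.Finite.subset (by simp [hull_empty]) S.support_eulerWeight_subset
  · exact (S.hasSum_eulerWeight hW).summable.hasFiniteSupport_of_discreteTopology

theorem sum_eulerWeight (hW : W.Nonempty) {A : Finset T}
    (hA : Function.support (S.eulerWeight W) ⊆ A) : ∑ y ∈ A, S.eulerWeight W y = -2 :=
  (hasSum_sum_of_ne_finset_zero fun _ hy => by_contra fun h => hy (hA h)).unique
    (S.hasSum_eulerWeight hW)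

end MedianPretree

/-! ### Counting edges in weighted graphs -/

section WeightedGraph

variable {V ε : Type*} [DecidableEq V] (src tgt : ε → V) {E : Finset ε} {A W : Finset V}

/-- The edges of `E` with both endpoints in `A`, the endpoints being given by `src` and `tgt`. -/
def edgesWithin (E : Finset ε) (A : Finset V) : Finset ε := {e ∈ E | src e ∈ A ∧ tgt e ∈ A}

/-- The degree of a vertex in the graph with edge set `E`, a loop counting twice. -/
def edgeDegree (E : Finset ε) (y : V) : ℕ :=
  (E.filter (src · = y)).card + (E.filter (tgt · = y)).card

variable {src tgt}

theorem mem_edgesWithin {e : ε} : e ∈ edgesWithin src tgt E A ↔ e ∈ E ∧ src e ∈ A ∧ tgt e ∈ A :=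
  Finset.mem_filter

theorem edgesWithin_mono (h : W ⊆ A) : edgesWithin src tgt E W ⊆ edgesWithin src tgt E A :=
  Finset.monotone_filter_right _ fun _ _ he => ⟨h he.1, h he.2⟩

theorem sum_edgeDegree_edgesWithin :
    ∑ y ∈ A, edgeDegree src tgt (edgesWithin src tgt E A) y =
      2 * (edgesWithin src tgt E A).card := by
  have hsrc := Finset.card_eq_sum_card_fiberwise (f := src) (s := edgesWithin src tgt E A) (t := A)
    fun _ he => (mem_edgesWithin.1 he).2.1
  have htgt := Finset.card_eq_sum_card_fiberwise (f := tgt) (s := edgesWithin src tgt E A) (t := A)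
    fun _ he => (mem_edgesWithin.1 he).2.2
  simp only [edgeDegree, Finset.sum_add_distrib, ← hsrc, ← htgt, two_mul]

theorem edgeDegree_mono {E' : Finset ε} (h : E' ⊆ E) (y : V) :
    edgeDegree src tgt E' y ≤ edgeDegree src tgt E y :=
  add_le_add (Finset.card_le_card (Finset.filter_subset_filter _ h))
    (Finset.card_le_card (Finset.filter_subset_filter _ h))

theorem card_edgesWithin_add_card_sdiff_le (hWA : W ⊆ A)
    (hdeg : ∀ y ∈ A \ W, 2 ≤ edgeDegree src tgt (edgesWithin src tgt E A) y) :
    (edgesWithin src tgt E W).card + (A \ W).card ≤ (edgesWithin src tgt E A).card := by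
  have hW : 2 * (edgesWithin src tgt E W).card ≤
      ∑ y ∈ W, edgeDegree src tgt (edgesWithin src tgt E A) y := by
    rw [← sum_edgeDegree_edgesWithin]
    exact Finset.sum_le_sum fun y _ => edgeDegree_mono (edgesWithin_mono hWA) y
  have hAW : (A \ W).card * 2 ≤ ∑ y ∈ A \ W, edgeDegree src tgt (edgesWithin src tgt E A) y :=
    Finset.card_nsmul_le_sum _ _ _ hdeg
  have hA := Finset.sum_sdiff (f := edgeDegree src tgt (edgesWithin src tgt E A)) hWA
  rw [sum_edgeDegree_edgesWithin] at hA
  omega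

variable {w : V → ℤ} {u : ε → ℤ}

theorem sum_edgesWithin_le_of_edgeDegree_lt_two (hsrc : ∀ e ∈ E, u e ≤ w (src e))
    (htgt : ∀ e ∈ E, u e ≤ w (tgt e)) {y : V} (hy : 0 ≤ w y)
    (hdeg : edgeDegree src tgt (edgesWithin src tgt E A) y < 2) :
    ∑ e ∈ edgesWithin src tgt E A, u e ≤
      ∑ e ∈ edgesWithin src tgt E (A.erase y), u e + w y := by
  classical
  set I := (edgesWithin src tgt E A).filter fun e => src e = y ∨ tgt e = y with hI
  have hIcard : I.card ≤ 1 := by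
    rw [hI, Finset.filter_or]
    exact (Finset.card_union_le _ _).trans (Nat.lt_succ_iff.1 hdeg)
  have hIsum : ∑ e ∈ I, u e ≤ w y := by
    have hle : ∀ e ∈ I, u e ≤ w y := fun e he => by
      obtain ⟨heA, rfl | rfl⟩ := Finset.mem_filter.1 he
      · exact hsrc e (mem_edgesWithin.1 heA).1
      · exact htgt e (mem_edgesWithin.1 heA).1
    calc ∑ e ∈ I, u e ≤ I.card • w y := Finset.sum_le_card_nsmul _ _ _ hle
      _ ≤ 1 • w y := nsmul_le_nsmul_left hy hIcard
      _ = w y := one_nsmul _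
  have herase : edgesWithin src tgt E (A.erase y) =
      (edgesWithin src tgt E A).filter fun e => ¬(src e = y ∨ tgt e = y) := by
    ext e
    simp only [mem_edgesWithin, Finset.mem_erase, Finset.mem_filter]
    tauto
  rw [← Finset.sum_filter_add_sum_filter_not _ fun e => src e = y ∨ tgt e = y, ← herase, add_comm]
  exact add_le_add_right hIsum _

/-- Vertices of degree at most one outside `W` may be deleted; once there are none left, the degree
count of `card_edgesWithin_add_card_sdiff_le` applies. -/
theorem two_mul_card_edgesWithin_sub_le (hWA : W ⊆ A) (hw : ∀ y ∈ A \ W, 0 ≤ w y)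
    (hsrc : ∀ e ∈ E, u e ≤ w (src e)) (htgt : ∀ e ∈ E, u e ≤ w (tgt e))
    (hsum : ∀ A' ⊆ A, ∑ e ∈ edgesWithin src tgt E A', (u e + 2) ≤ ∑ y ∈ A', (w y + 2)) :
    2 * ((edgesWithin src tgt E W).card - W.card : ℤ) ≤
      ∑ y ∈ A, w y - ∑ e ∈ edgesWithin src tgt E A, u e := by
  induction A using Finset.strongInduction with
  | H A ih =>
    by_cases hdeg : ∀ y ∈ A \ W, 2 ≤ edgeDegree src tgt (edgesWithin src tgt E A) y
    · have hcard := card_edgesWithin_add_card_sdiff_le hWA hdeg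
      have hA := Finset.card_sdiff_add_card_eq_card hWA
      have hsumA := hsum A subset_rfl
      simp only [Finset.sum_add_distrib, Finset.sum_const, nsmul_eq_mul] at hsumA
      zify at hcard hA
      linarith
    · push Not at hdeg
      obtain ⟨y, hy, hdeg⟩ := hdeg
      obtain ⟨hyA, hyW⟩ := Finset.mem_sdiff.1 hy
      have hsub := Finset.erase_subset y A
      have hle := ih _ (Finset.erase_ssubset hyA) (Finset.subset_erase.2 ⟨hWA, hyW⟩)
        (fun z hz => hw z (Finset.sdiff_subset_sdiff hsub subset_rfl hz))
        fun A' hA' => hsum A' (hA'.trans hsub)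
      have hE := sum_edgesWithin_le_of_edgeDegree_lt_two hsrc htgt (hw y hy) hdeg
      have hA := Finset.add_sum_erase A w hyA
      linarith

end WeightedGraph

/-! ### Counting orbit edges in a pretree with a group action -/

theorem card_le_card_of_claim {ι X D G : Type*} [Group G] [MulAction G D] (s : X → G)
    (claim : D → Option (X × Bool)) {I : Finset ι} {V : Finset D} {col : ι → X} {src : ι → D}
    (hinj : Set.InjOn (fun i => (col i, src i)) I)
    (hsrc : ∀ i ∈ I, src i ∈ V) (htgt : ∀ i ∈ I, s (col i) • src i ∈ V)
    (hclaim : ∀ i ∈ I, claim (src i) = some (col i, false) ∨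
      claim (s (col i) • src i) = some (col i, true)) : I.card ≤ V.card := by
  classical
  refine Finset.card_le_card_of_injOn
    (fun i => if claim (src i) = some (col i, false) then src i else s (col i) • src i)
    (fun i hi => ?_) fun i hi j hj hij => hinj hi hj ?_
  · dsimp only
    split_ifs
    · exact hsrc i hi
    · exact htgt i hi
  have hi := hclaim i hi
  have hj := hclaim j hj
  dsimp only at hij
  split_ifs at hij with h h' h'
  · simp_all
  · simp_all
  · simp_all
  · have hcol : col i = col j := by
      have := (hi.resolve_left h).symm.trans ((congrArg claim hij).trans (hj.resolve_left h'))
      simpa using this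
    rw [hcol] at hij
    exact Prod.ext hcol (smul_left_cancel _ hij)

open Classical in
/-- The edges `y — s x • y`, coloured by `x`, of the Schreier graph of the action with respect to
`s` which have both endpoints in `W`. -/
noncomputable def schreierEdges {G X T : Type*} [SMul G T] [Fintype X] (s : X → G) (W : Finset T) :
    Finset (X × T) :=
  {e ∈ Finset.univ ×ˢ W | s e.1 • e.2 ∈ W}

theorem mem_schreierEdges {G X T : Type*} [SMul G T] [Fintype X] {s : X → G} {W : Finset T}
    {e : X × T} : e ∈ schreierEdges s W ↔ e.2 ∈ W ∧ s e.1 • e.2 ∈ W := by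
  simp [schreierEdges]

namespace MedianPretree

open scoped Pointwise

variable {T G X : Type*} (S : MedianPretree T) [Group G] [MulAction G T]

/-- The action of `G` on `T` preserves the betweenness relation. -/
def IsInvariant (G : Type*) [Group G] [MulAction G T] : Prop :=
  ∀ (g : G) {a y b : T}, S.Between a y b → S.Between (g • a) (g • y) (g • b)

variable {S} {W W' : Finset T} {g : G} {y : T}

theorem IsInvariant.smul_dir (hS : S.IsInvariant G) (g : G) (y z : T) :
    g • S.dir y z = S.dir (g • y) (g • z) := by
  refine Prod.ext rfl (Set.ext fun w => ?_)
  have hbtw : S.Between z y (g⁻¹ • w) ↔ S.Between (g • z) (g • y) w :=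
    ⟨fun h => by simpa using hS g h, fun h => by simpa using hS g⁻¹ h⟩
  change w ∈ g • (S.dir y z).2 ↔ _
  simp [Set.mem_smul_set_iff_inv_smul_mem, dir, hbtw, inv_smul_eq_iff]

theorem IsInvariant.smul_mem_hull (hS : S.IsInvariant G)
    (hg : ∀ a ∈ W', g • a ∈ W) (hy : y ∈ S.hull W') : g • y ∈ S.hull W := by
  obtain ⟨a, ha, b, hb, h⟩ := hy
  exact ⟨_, hg a ha, _, hg b hb, hS g h⟩

theorem IsInvariant.smul_mem_dirs (hS : S.IsInvariant G) (hg : ∀ a ∈ W', g • a ∈ W)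
    {d : T × Set T} (hd : d ∈ S.dirs W' y) : g • d ∈ S.dirs W (g • y) := by
  obtain ⟨z, hz, hzy, rfl⟩ := S.mem_dirs.1 hd
  exact S.mem_dirs.2 ⟨g • z, hg z hz, by simpa using hzy, (hS.smul_dir _ _ _).symm⟩

theorem IsInvariant.valence_le_valence_smul (hS : S.IsInvariant G)
    (hg : ∀ a ∈ W', g • a ∈ W) (y : T) : S.valence W' y ≤ S.valence W (g • y) :=
  Finset.card_le_card_of_injOn (g • ·) (fun _ hd => hS.smul_mem_dirs hg hd)
    (MulAction.injective g).injOn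

open Classical in
/-- The points of `W` which the generator `s x` moves inside `W`. -/
noncomputable def domain (s : X → G) (W : Finset T) (x : X) : Finset T := {y ∈ W | s x • y ∈ W}

variable {s : X → G} {x : X}

theorem mem_domain : y ∈ domain s W x ↔ y ∈ W ∧ s x • y ∈ W := by simp [domain]

theorem domain_subset : domain s W x ⊆ W := fun _ hy => (mem_domain.1 hy).1

theorem smul_mem_of_mem_domain (hy : y ∈ domain s W x) : s x • y ∈ W :=
  (mem_domain.1 hy).2

theorem IsInvariant.exists_finset_subset_hull [Finite X] (hS : S.IsInvariant G) :
    ∃ A : Finset T, W ⊆ A ∧ (A : Set T) ⊆ S.hull W ∧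
      Function.support (S.eulerWeight W) ⊆ A ∧
      ∀ x, ∀ y ∈ Function.support (S.eulerWeight (domain s W x)), y ∈ A ∧ s x • y ∈ A := by
  classical
  have := Fintype.ofFinite X
  let supp (W' : Finset T) : Finset T := (S.finite_support_eulerWeight W').toFinset
  refine ⟨W ∪ supp W ∪ Finset.univ.biUnion fun x =>
    supp (domain s W x) ∪ s x • supp (domain s W x), ?_, ?_, ?_, fun x y hy => ?_⟩
  · intro y hy
    simp [hy]
  · intro y hy
    simp only [supp, Finset.mem_coe, Finset.mem_union, Finset.mem_biUnion, Set.Finite.mem_toFinset,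
      Finset.mem_univ, true_and, Finset.mem_smul_finset] at hy
    obtain (hy | hy) | ⟨x, hy | ⟨z, hz, rfl⟩⟩ := hy
    · exact S.subset_hull hy
    · exact S.support_eulerWeight_subset hy
    · exact S.hull_mono domain_subset (S.support_eulerWeight_subset hy)
    · exact hS.smul_mem_hull (fun _ => smul_mem_of_mem_domain) (S.support_eulerWeight_subset hz)
  · intro y hy
    simp only [supp, Finset.mem_coe, Finset.mem_union, Set.Finite.mem_toFinset]
    exact .inl (.inr hy)
  · have hy' : y ∈ supp (domain s W x) := (Set.Finite.mem_toFinset _).2 hy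
    have hsub := Finset.subset_biUnion_of_mem
      (fun x => supp (domain s W x) ∪ s x • supp (domain s W x)) (Finset.mem_univ x)
    exact ⟨Finset.mem_union_right _ (hsub (Finset.mem_union_left _ hy')),
      Finset.mem_union_right _
        (hsub (Finset.mem_union_right _ (Finset.smul_mem_smul_finset hy')))⟩

variable [Fintype X]

open Classical in
/-- The edges `y — s x • y`, coloured by `x`, for `y ∈ A` in the hull of `domain s W x`. -/
noncomputable def hullEdges (S : MedianPretree T) (s : X → G) (W A : Finset T) :
    Finset (X × T) :=
  {e ∈ Finset.univ ×ˢ A | e.2 ∈ S.hull (domain s W e.1)}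

theorem mem_hullEdges {A : Finset T} {e : X × T} :
    e ∈ S.hullEdges s W A ↔ e.2 ∈ A ∧ e.2 ∈ S.hull (domain s W e.1) := by simp [hullEdges]

theorem neg_two_mul_card_le_sum_hullEdges [DecidableEq T] {A : Finset T}
    (hA : ∀ x, ∀ y ∈ Function.support (S.eulerWeight (domain s W x)), y ∈ A ∧ s x • y ∈ A) :
    -2 * (Fintype.card X : ℤ) ≤ ∑ e ∈ edgesWithin Prod.snd (fun e => s e.1 • e.2)
      (S.hullEdges s W A) A, ((S.valence (domain s W e.1) e.2 : ℤ) - 2) := by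
  have hx : ∀ x, -2 ≤ ∑ y ∈ A, S.eulerWeight (domain s W x) y := by
    intro x
    obtain h | h := (domain s W x).eq_empty_or_nonempty
    · simp [h, eulerWeight, hull_empty]
    · exact (S.sum_eulerWeight h fun y hy => (hA x y hy).1).ge
  calc -2 * (Fintype.card X : ℤ) = ∑ _x : X, (-2 : ℤ) := by simp [mul_comm]
    _ ≤ ∑ x, ∑ y ∈ A, S.eulerWeight (domain s W x) y := Finset.sum_le_sum fun x _ => hx x
    _ = ∑ e ∈ Finset.univ ×ˢ A, S.eulerWeight (domain s W e.1) e.2 :=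
      (Finset.sum_product' _ _ fun x => S.eulerWeight (domain s W x)).symm
    _ = _ := by
      rw [edgesWithin, hullEdges, Finset.filter_filter, Finset.sum_filter]
      refine Finset.sum_congr rfl fun e _ => ?_
      split_ifs with h
      · rw [eulerWeight, if_pos h.1]
      · by_contra hne
        have := hA e.1 e.2 hne
        exact h ⟨S.support_eulerWeight_subset hne, this⟩

/-- Every edge of the graph of directions is claimed by one of its endpoints and every direction
claims at most one edge, so there are at most as many edges as directions. -/
theorem IsInvariant.sum_valence_hullEdges_le [DecidableEq T] (hS : S.IsInvariant G)
    (claim : T × Set T → Option (X × Bool))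
    (hclaim : ∀ y z, z ≠ y → ∀ x, claim (S.dir y z) = some (x, false) ∨
      claim (s x • S.dir y z) = some (x, true)) (A A' : Finset T) :
    ∑ e ∈ edgesWithin Prod.snd (fun e => s e.1 • e.2) (S.hullEdges s W A) A',
      S.valence (domain s W e.1) e.2 ≤ ∑ y ∈ A', S.valence W y := by
  set E := edgesWithin Prod.snd (fun e => s e.1 • e.2) (S.hullEdges s W A) A'
  let I : Finset (Σ _ : X × T, T × Set T) := E.sigma fun e => S.dirs (domain s W e.1) e.2
  suffices I.card ≤ (A'.biUnion (S.dirs W)).card from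
    (Finset.card_sigma _ _).symm.trans_le (this.trans Finset.card_biUnion_le)
  have hI : ∀ i ∈ I, i.1.2 ∈ A' ∧ s i.1.1 • i.1.2 ∈ A' ∧
      i.2 ∈ S.dirs (domain s W i.1.1) i.1.2 := fun i hi =>
    have h := Finset.mem_sigma.1 hi
    ⟨(mem_edgesWithin.1 h.1).2.1, (mem_edgesWithin.1 h.1).2.2, h.2⟩
  refine card_le_card_of_claim s claim (col := fun i => i.1.1) (src := Sigma.snd) ?_
    (fun i hi => ?_) (fun i hi => ?_) fun i hi => ?_
  · rintro ⟨⟨x, y⟩, d⟩ hi ⟨⟨x', y'⟩, d'⟩ hj h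
    obtain ⟨rfl, rfl⟩ : x = x' ∧ d = d' := by simpa using h
    obtain rfl : d.1 = y := S.fst_eq_of_mem_dirs (hI _ hi).2.2
    obtain rfl : d.1 = y' := S.fst_eq_of_mem_dirs (hI _ hj).2.2
    rfl
  · obtain ⟨hy, -, hd⟩ := hI i hi
    exact Finset.mem_biUnion.2 ⟨_, hy, S.dirs_mono domain_subset _ hd⟩
  · obtain ⟨-, hy, hd⟩ := hI i hi
    exact Finset.mem_biUnion.2 ⟨_, hy, hS.smul_mem_dirs (fun _ => smul_mem_of_mem_domain) hd⟩
  · obtain ⟨z, -, hz, h⟩ := S.mem_dirs.1 (hI i hi).2.2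
    rw [← h]
    exact hclaim _ z hz _

theorem schreierEdges_subset_edgesWithin [DecidableEq T] {A : Finset T} (hWA : W ⊆ A) :
    schreierEdges s W ⊆
      edgesWithin Prod.snd (fun e => s e.1 • e.2) (S.hullEdges s W A) W := by
  intro e he
  have he := mem_schreierEdges.1 he
  have hhull : e.2 ∈ S.hull (domain s W e.1) := S.subset_hull (mem_domain.2 he)
  exact mem_edgesWithin.2 ⟨mem_hullEdges.2 ⟨hWA he.1, hhull⟩, he⟩

theorem IsInvariant.card_schreierEdges_add_one_le (hS : S.IsInvariant G)
    (claim : T × Set T → Option (X × Bool))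
    (hclaim : ∀ y z, z ≠ y → ∀ x, claim (S.dir y z) = some (x, false) ∨
      claim (s x • S.dir y z) = some (x, true)) (hW : W.Nonempty) :
    (schreierEdges s W).card + 1 ≤ W.card + Fintype.card X := by
  classical
  obtain ⟨A, hWA, hAW, hsuppW, hsupp⟩ := hS.exists_finset_subset_hull (s := s) (W := W)
  have hcore := two_mul_card_edgesWithin_sub_le (src := Prod.snd) (tgt := fun e => s e.1 • e.2)
    (E := S.hullEdges s W A) (w := fun y => (S.valence W y : ℤ) - 2)
    (u := fun e => (S.valence (domain s W e.1) e.2 : ℤ) - 2) hWA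
    (fun y hy => ?_) (fun e _ => ?_) (fun e _ => ?_) (fun A' _ => ?_)
  · have hedges := Finset.card_le_card (schreierEdges_subset_edgesWithin (S := S) (s := s) hWA)
    have hlower := neg_two_mul_card_le_sum_hullEdges hsupp
    have heuler : ∑ y ∈ A, ((S.valence W y : ℤ) - 2) = -2 := by
      rw [← S.sum_eulerWeight hW hsuppW]
      exact Finset.sum_congr rfl fun y hy => (if_pos (hAW hy)).symm
    rw [heuler] at hcore
    zify at hedges ⊢
    linarith
  · obtain ⟨hyA, hyW⟩ := Finset.mem_sdiff.1 hy
    have := S.two_le_valence (hAW hyA) hyW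
    omega
  · have := S.valence_mono (domain_subset (s := s) (W := W) (x := e.1)) e.2
    omega
  · have := hS.valence_le_valence_smul
      (fun _ => smul_mem_of_mem_domain (s := s) (W := W) (x := e.1)) e.2
    omega
  · simpa using mod_cast hS.sum_valence_hullEdges_le claim hclaim A A'

end MedianPretree

/-! ### Cancellation and first letters in free groups -/

theorem exists_eq_append_of_head?_ne {α : Type*} (L₁ L₂ : List α) :
    ∃ p a b, L₁ = p ++ a ∧ L₂ = p ++ b ∧ ∀ x ∈ a.head?, x ∉ b.head? := by
  induction L₁ generalizing L₂ with
  | nil => exact ⟨[], [], L₂, rfl, rfl, by simp⟩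
  | cons x L ih =>
    obtain _ | ⟨y, L'⟩ := L₂
    · exact ⟨[], x :: L, [], rfl, rfl, by simp⟩
    · obtain rfl | h := eq_or_ne x y
      · obtain ⟨p, a, b, rfl, rfl, hab⟩ := ih L'
        exact ⟨x :: p, a, b, rfl, rfl, hab⟩
      · exact ⟨[], x :: L, y :: L', rfl, rfl, by simpa using h.symm⟩

theorem isReduced_invRev_append {X : Type*} {a b : List (X × Bool)}
    (ha : FreeGroup.IsReduced (FreeGroup.invRev a)) (hb : FreeGroup.IsReduced b)
    (hab : ∀ x ∈ a.head?, x ∉ b.head?) : FreeGroup.IsReduced (FreeGroup.invRev a ++ b) := by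
  refine List.isChain_append.2 ⟨ha, hb, ?_⟩
  rintro ⟨x, ε⟩ hx ⟨y, ε'⟩ hy (rfl : x = y)
  have hxa : (x, !ε) ∈ a.head? := by
    cases ε <;> simpa [FreeGroup.invRev] using hx
  have hne : (!ε) ≠ ε' := by
    rintro rfl
    exact hab _ hxa hy
  simpa using hne

section Words

variable {X : Type*} [DecidableEq X]

theorem exists_toWord_inv_mul_eq (g h : FreeGroup X) :
    ∃ p a b, g.toWord = p ++ a ∧ h.toWord = p ++ b ∧ (∀ x ∈ a.head?, x ∉ b.head?) ∧
      (g⁻¹ * h).toWord = FreeGroup.invRev a ++ b := by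
  obtain ⟨p, a, b, hg, hh, hab⟩ := exists_eq_append_of_head?_ne g.toWord h.toWord
  refine ⟨p, a, b, hg, hh, hab, ?_⟩
  have hgh : g⁻¹ * h = FreeGroup.mk (FreeGroup.invRev a ++ b) := by
    rw [← g.mk_toWord, ← h.mk_toWord, hg, hh, ← FreeGroup.mul_mk, ← FreeGroup.mul_mk,
      ← FreeGroup.mul_mk, ← FreeGroup.inv_mk]
    group
  have ha : FreeGroup.IsReduced (FreeGroup.invRev a) :=
    (FreeGroup.isReduced_toWord (x := g⁻¹)).infix <| by
      rw [FreeGroup.toWord_inv, hg, FreeGroup.invRev_append]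
      exact (List.prefix_append _ _).isInfix
  have hb : FreeGroup.IsReduced b :=
    (FreeGroup.isReduced_toWord (x := h)).infix (hh ▸ (List.suffix_append p b).isInfix)
  rw [hgh, FreeGroup.toWord_mk, (isReduced_invRev_append ha hb hab).reduce_eq]

theorem head?_toWord_mul_of_norm_lt {g h : FreeGroup X} (hgh : h.norm < g.norm) :
    (g * h).toWord.head? = g.toWord.head? := by
  obtain ⟨p, a, b, hg, hh, -, hmul⟩ := exists_toWord_inv_mul_eq g⁻¹ h
  rw [inv_inv] at hmul
  have hg' : g.toWord = FreeGroup.invRev a ++ FreeGroup.invRev p := by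
    rw [← inv_inv g, FreeGroup.toWord_inv, hg, FreeGroup.invRev_append]
  have ha : FreeGroup.invRev a ≠ [] := by
    intro ha
    simp [FreeGroup.norm, hg', hh, ha] at hgh
  rw [hmul, hg', List.head?_append_of_ne_nil _ ha, List.head?_append_of_ne_nil _ ha]

theorem head?_toWord_or_head?_toWord_of_mul (x : X) (g : FreeGroup X) :
    g.toWord.head? = some (x, false) ∨ (FreeGroup.of x * g).toWord.head? = some (x, true) := by
  obtain ⟨p, a, b, hx, hg, -, hmul⟩ := exists_toWord_inv_mul_eq (FreeGroup.of x)⁻¹ g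
  rw [inv_inv] at hmul
  replace hx : [(x, false)] = p ++ a := by simpa [FreeGroup.invRev] using hx
  obtain ⟨rfl, rfl⟩ | ⟨rfl, rfl⟩ := List.singleton_eq_append_iff.1 hx
  · exact .inr (by simp [hmul, FreeGroup.invRev])
  · exact .inl (by simp [hg])

theorem finite_norm_le [Finite X] (n : ℕ) : {g : FreeGroup X | g.norm ≤ n}.Finite :=
  ((List.finite_length_le (X × Bool) n).subset (by
    rintro _ ⟨g, hg, rfl⟩
    exact hg)).of_finite_image (f := FreeGroup.toWord) FreeGroup.toWord_injective.injOn

variable [Finite X]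

/-- The first letter of almost all terms of a sequence in a free group of finite rank, along a
fixed nonprincipal ultrafilter. It is `none` if almost all terms are trivial. -/
noncomputable def limitHead (u : ℕ → FreeGroup X) : Option (X × Bool) :=
  ((Filter.hyperfilter ℕ).map fun k => (u k).toWord.head?).eq_pure_of_finite.choose

theorem limitHead_eq_iff {u : ℕ → FreeGroup X} {a : Option (X × Bool)} :
    limitHead u = a ↔ ∀ᶠ k in Filter.hyperfilter ℕ, (u k).toWord.head? = a := by
  have h := ((Filter.hyperfilter ℕ).map fun k => (u k).toWord.head?).eq_pure_of_finite.choose_spec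
  change _ ↔ {a} ∈ (Filter.hyperfilter ℕ).map fun k => (u k).toWord.head?
  rw [h]
  rfl

theorem limitHead_mul_right {u : ℕ → FreeGroup X}
    (hu : ∀ n, ∀ᶠ k in Filter.hyperfilter ℕ, n < (u k).norm) (g : FreeGroup X) :
    limitHead (fun k => u k * g) = limitHead u := by
  refine limitHead_eq_iff.2 ?_
  filter_upwards [hu g.norm, limitHead_eq_iff.1 (rfl : limitHead u = _)] with k hk hhead
  rw [head?_toWord_mul_of_norm_lt hk, hhead]

theorem limitHead_or_limitHead_of_mul (x : X) (u : ℕ → FreeGroup X) :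
    limitHead u = some (x, false) ∨ limitHead (fun k => FreeGroup.of x * u k) = some (x, true) := by
  rw [limitHead_eq_iff, limitHead_eq_iff, ← Ultrafilter.eventually_or]
  exact .of_forall fun k => head?_toWord_or_head?_toWord_of_mul x (u k)

theorem eventually_lt_norm_mul_pow {c : FreeGroup X} (hc : c ≠ 1) (g : FreeGroup X) (n : ℕ) :
    ∀ᶠ k in Filter.hyperfilter ℕ, n < (g * c ^ k).norm := by
  have hinj : Function.Injective fun k : ℕ => g * c ^ k := (mul_right_injective g).comp
    (injective_pow_iff_not_isOfFinOrder.2 (not_isOfFinOrder_of_isMulTorsionFree hc))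
  filter_upwards [((finite_norm_le n).preimage hinj.injOn).compl_mem_hyperfilter] with k hk
  simpa using hk

end Words

theorem exists_ne_one_forall_commute {G : Type*} [Group G] [Nontrivial G] (H : Subgroup G) :
    ∃ c : G, c ≠ 1 ∧ (IsMulCommutative H → ∀ g ∈ H, Commute g c) := by
  obtain rfl | hH := eq_or_ne H ⊥
  · obtain ⟨c, hc⟩ := exists_ne (1 : G)
    exact ⟨c, hc, fun _ g hg => by simp [Subgroup.mem_bot.1 hg]⟩
  · obtain ⟨c, hcH, hc⟩ := H.bot_or_exists_ne_one.resolve_left hH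
    exact ⟨c, hc, fun _ g hg => congrArg Subtype.val (mul_comm' (⟨g, hg⟩ : H) ⟨c, hcH⟩)⟩

theorem exists_orbit_representatives (G D : Type*) [Group G] [MulAction G D] :
    ∃ (rep : D → D) (γ : D → G), (∀ δ, γ δ • rep δ = δ) ∧ ∀ (g : G) δ, rep (g • δ) = rep δ := by
  let rep (δ : D) : D := (Quotient.mk (MulAction.orbitRel G D) δ).out
  choose γ hγ using fun δ => MulAction.orbitRel_apply.1
    ((MulAction.orbitRel G D).symm (Quotient.mk_out (s := MulAction.orbitRel G D) δ))
  exact ⟨rep, γ, hγ, fun g δ => congrArg Quotient.out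
    (Quotient.sound (MulAction.orbitRel_apply.2 ⟨g, rfl⟩))⟩

/-- On the orbit of a representative `δ₀` take the powers `γ c ^ k` for `γ • δ₀`, where `c ≠ 1`
commutes with the stabilizer of `δ₀`: another choice of `γ` only multiplies them on the right. -/
theorem exists_growing_sequences (X D : Type*) [Finite X] [Nonempty X] [DecidableEq X]
    [MulAction (FreeGroup X) D] :
    ∃ u : D → ℕ → FreeGroup X,
      (∀ δ g n, ∀ᶠ k in Filter.hyperfilter ℕ, n < (g * u δ k).norm) ∧
      ∀ δ, IsMulCommutative (MulAction.stabilizer (FreeGroup X) δ) → ∀ g, ∃ s, ∀ k,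
        u (g • δ) k = g * u δ k * s := by
  obtain ⟨rep, γ, hγ, hrep⟩ := exists_orbit_representatives (FreeGroup X) D
  choose c hc hcomm using fun δ : D =>
    exists_ne_one_forall_commute (MulAction.stabilizer (FreeGroup X) δ)
  refine ⟨fun δ k => γ δ * c (rep δ) ^ k, fun δ g n => ?_,
    fun δ hδ g => ⟨(g * γ δ)⁻¹ * γ (g • δ), fun k => ?_⟩⟩
  · simpa only [mul_assoc] using eventually_lt_norm_mul_pow (hc (rep δ)) (g * γ δ) n
  have hstab : IsMulCommutative (MulAction.stabilizer (FreeGroup X) (rep δ)) := by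
    rw [← inv_smul_eq_iff.2 (hγ δ).symm, MulAction.stabilizer_smul_eq_stabilizer_map_conj]
    infer_instance
  have hs : (g * γ δ)⁻¹ * γ (g • δ) ∈ MulAction.stabilizer (FreeGroup X) (rep δ) := by
    have h := hγ (g • δ)
    rw [hrep] at h
    rw [MulAction.mem_stabilizer_iff, mul_smul, h, inv_smul_eq_iff, mul_smul, hγ]
  have hsc := ((hcomm _ hstab _ hs).pow_right k).eq
  calc γ (g • δ) * c (rep (g • δ)) ^ k
      = g * γ δ * ((g * γ δ)⁻¹ * γ (g • δ) * c (rep δ) ^ k) := by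
        rw [hrep]
        group
    _ = g * (γ δ * c (rep δ) ^ k) * ((g * γ δ)⁻¹ * γ (g • δ)) := by
        rw [hsc]
        simp only [mul_assoc]

/-- The claim of `δ` is the first letter of the infinite word attached to `δ` by
`exists_growing_sequences`. -/
theorem exists_claim (X D : Type*) [Finite X] [MulAction (FreeGroup X) D] :
    ∃ claim : D → Option (X × Bool), ∀ δ,
      IsMulCommutative (MulAction.stabilizer (FreeGroup X) δ) → ∀ x,
        claim δ = some (x, false) ∨ claim (FreeGroup.of x • δ) = some (x, true) := by
  classical
  obtain _ | _ := isEmpty_or_nonempty X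
  · exact ⟨fun _ => none, fun _ _ x => isEmptyElim x⟩
  obtain ⟨u, hgrow, hequiv⟩ := exists_growing_sequences X D
  refine ⟨fun δ => limitHead (u δ), fun δ hδ x => ?_⟩
  obtain ⟨s, hs⟩ := hequiv δ hδ (FreeGroup.of x)
  dsimp only
  rw [funext hs, limitHead_mul_right (hgrow δ (FreeGroup.of x))]
  exact limitHead_or_limitHead_of_mul x (u δ)

/-! ### Generators of stabilizers in free groups -/

theorem closure_schreier_eq_stabilizer {G X V : Type*} [Group G] [MulAction G V] {s : X → G}
    (hs : Subgroup.closure (Set.range s) = ⊤) {o : V} {t : V → G} (hto : t o = 1)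
    (ht : ∀ v, t v • o = v) :
    Subgroup.closure (Set.range fun e : X × V => (t (s e.1 • e.2))⁻¹ * (s e.1 * t e.2)) =
      MulAction.stabilizer G o := by
  set H := Subgroup.closure (Set.range fun e : X × V => (t (s e.1 • e.2))⁻¹ * (s e.1 * t e.2))
  refine le_antisymm ((Subgroup.closure_le _).2 ?_) fun g hg => ?_
  · rintro _ ⟨e, rfl⟩
    simp [MulAction.mem_stabilizer_iff, mul_smul, ht, inv_smul_eq_iff]
  have cocycle_mem : ∀ g v, (t (g • v))⁻¹ * (g * t v) ∈ H := by
    intro g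
    induction hs ▸ Subgroup.mem_top g using Subgroup.closure_induction with
    | mem _ h =>
      obtain ⟨x, rfl⟩ := h
      exact fun v => Subgroup.subset_closure ⟨(x, v), rfl⟩
    | one => simp [H.one_mem]
    | mul g h _ _ hg hh =>
      intro v
      convert H.mul_mem (hg (h • v)) (hh v) using 1
      rw [mul_smul]
      group
    | inv g _ hg =>
      intro v
      have hv := H.inv_mem (hg (g⁻¹ • v))
      rw [smul_inv_smul] at hv
      convert hv using 1
      group
  simpa [MulAction.mem_stabilizer_iff.1 hg, hto] using cocycle_mem g o

namespace SchreierTree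

variable {X V : Type*} [DecidableEq X] [MulAction (FreeGroup X) V]

/-- The distance from `o` to `v` in the Schreier graph of the free group action. -/
noncomputable def depth (o v : V) : ℕ :=
  sInf {n | ∃ g : FreeGroup X, g.norm = n ∧ g • o = v}

variable (X) in
theorem depth_self (o : V) : depth (X := X) o o = 0 :=
  Nat.sInf_eq_zero.2 (.inl ⟨1, by simp⟩)

theorem depth_smul_le (g : FreeGroup X) (o : V) : depth (X := X) o (g • o) ≤ g.norm :=
  Nat.sInf_le ⟨g, rfl, rfl⟩

variable [MulAction.IsPretransitive (FreeGroup X) V]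

theorem exists_norm_eq_depth (o v : V) :
    ∃ g : FreeGroup X, g.norm = depth (X := X) o v ∧ g • o = v :=
  let ⟨g, hg⟩ := MulAction.exists_smul_eq (FreeGroup X) o v
  Nat.sInf_mem (s := {n | ∃ g : FreeGroup X, g.norm = n ∧ g • o = v}) ⟨_, g, rfl, hg⟩

theorem exists_depth_inv_smul_lt {o v : V} (h : v ≠ o) :
    ∃ a : X × Bool, depth (X := X) o ((FreeGroup.mk [a])⁻¹ • v) < depth (X := X) o v := by
  obtain ⟨g, hg, rfl⟩ := exists_norm_eq_depth (X := X) o v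
  cases hw : g.toWord with
  | nil => simp [FreeGroup.toWord_eq_nil_iff.1 hw] at h
  | cons a w =>
    have hmk : g = FreeGroup.mk [a] * FreeGroup.mk w := by
      rw [FreeGroup.mul_mk, List.singleton_append, ← hw, FreeGroup.mk_toWord]
    refine ⟨a, ?_⟩
    rw [← hg, hmk, mul_smul, inv_smul_smul, ← hmk]
    exact (depth_smul_le _ o).trans_lt
      (FreeGroup.norm_mk_le.trans_lt (by simp [FreeGroup.norm, hw]))

open Classical in
/-- A Schreier transversal: the product of the labels along a geodesic from `o` to `v`. -/
noncomputable def transversal (o v : V) : FreeGroup X :=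
  if h : v = o then 1 else
    FreeGroup.mk [(exists_depth_inv_smul_lt h).choose] *
      transversal o ((FreeGroup.mk [(exists_depth_inv_smul_lt (X := X) h).choose])⁻¹ • v)
termination_by depth (X := X) o v
decreasing_by exact (exists_depth_inv_smul_lt h).choose_spec

theorem transversal_self (o : V) : transversal (X := X) o o = 1 := by
  rw [transversal, dif_pos rfl]

theorem exists_transversal_eq {o v : V} (h : v ≠ o) :
    ∃ a : X × Bool, depth (X := X) o ((FreeGroup.mk [a])⁻¹ • v) < depth (X := X) o v ∧
      transversal o v = FreeGroup.mk [a] * transversal o ((FreeGroup.mk [a])⁻¹ • v) := by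
  refine ⟨_, (exists_depth_inv_smul_lt h).choose_spec, ?_⟩
  rw [transversal, dif_neg h]

theorem transversal_smul (o v : V) : transversal (X := X) o v • o = v := by
  induction hn : depth (X := X) o v using Nat.strong_induction_on generalizing v with
  | _ n ih =>
    obtain rfl | h := eq_or_ne v o
    · rw [transversal_self, one_smul]
    · obtain ⟨a, ha, hv⟩ := exists_transversal_eq (X := X) h
      rw [hv, mul_smul, ih _ (hn ▸ ha) _ rfl, smul_inv_smul]

/-- The edges of the Schreier graph outside the geodesic tree traced out by `transversal`. -/
def nontreeEdges (o : V) : Set (X × V) :=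
  {e | transversal o (FreeGroup.of e.1 • e.2) ≠ FreeGroup.of e.1 * transversal o e.2}

theorem exists_notMem_nontreeEdges {o v : V} (h : v ≠ o) :
    ∃ e : X × V, e ∉ nontreeEdges o ∧
      (e.2 = v ∧ depth (X := X) o (FreeGroup.of e.1 • e.2) < depth (X := X) o v ∨
        FreeGroup.of e.1 • e.2 = v ∧ depth (X := X) o e.2 < depth (X := X) o v) := by
  obtain ⟨⟨x, b⟩, hdepth, hv⟩ := exists_transversal_eq (X := X) h
  cases b
  · have hof : FreeGroup.mk [(x, false)] = (FreeGroup.of x)⁻¹ := rfl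
    rw [hof, inv_inv] at hdepth hv
    exact ⟨(x, v), by simp [nontreeEdges, hv], .inl ⟨rfl, hdepth⟩⟩
  · change depth o ((FreeGroup.of x)⁻¹ • v) < _ at hdepth
    change _ = FreeGroup.of x * transversal o ((FreeGroup.of x)⁻¹ • v) at hv
    exact ⟨(x, (FreeGroup.of x)⁻¹ • v), by simp [nontreeEdges, ← hv], .inr ⟨by simp, hdepth⟩⟩

theorem finite_depth_le [Finite X] (o : V) (R : ℕ) : {v | depth (X := X) o v ≤ R}.Finite := by
  refine ((finite_norm_le (X := X) R).image (· • o)).subset fun v hv => ?_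
  obtain ⟨g, hg, hgv⟩ := exists_norm_eq_depth (X := X) o v
  exact ⟨g, hg.trans_le hv, hgv⟩

variable [Fintype X] {o : V}

/-- In a ball around `o`, choosing for each vertex other than `o` the tree edge to its parent is
injective. -/
theorem card_add_card_le_card_schreierEdges {N : Finset (X × V)} {W : Finset V} {R : ℕ}
    (hN : (N : Set (X × V)) ⊆ nontreeEdges o) (hNW : N ⊆ schreierEdges FreeGroup.of W)
    (hW : ∀ v, v ∈ W ↔ depth (X := X) o v ≤ R) :
    N.card + W.card ≤ (schreierEdges (T := V) (FreeGroup.of : X → FreeGroup X) W).card + 1 := by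
  classical
  choose e htree hdeep using fun v : {v // v ≠ o} => exists_notMem_nontreeEdges (X := X) v.2
  have hinj : e.Injective := by
    intro v w hvw
    have hv := hdeep v
    have hw := hdeep w
    rw [hvw] at hv
    refine Subtype.ext ?_
    obtain ⟨hv, hv'⟩ | ⟨hv, hv'⟩ := hv <;> obtain ⟨hw, hw'⟩ | ⟨hw, hw'⟩ := hw <;>
      rw [← hv] at hv' ⊢ <;> rw [← hw] at hw' ⊢ <;> omega
  let E := (W.subtype (· ≠ o)).map ⟨e, hinj⟩
  have hsub : N ∪ E ⊆ schreierEdges FreeGroup.of W := by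
    refine Finset.union_subset hNW fun e' he' => ?_
    obtain ⟨v, hv, rfl⟩ := Finset.mem_map.1 he'
    have hvW := (hW v).1 (Finset.mem_subtype.1 hv)
    rw [mem_schreierEdges, hW, hW]
    obtain ⟨h, h'⟩ | ⟨h, h'⟩ := hdeep v
    · exact ⟨h ▸ hvW, h'.le.trans hvW⟩
    · exact ⟨h'.le.trans hvW, h ▸ hvW⟩
  have hdisj : Disjoint N E := by
    refine Finset.disjoint_left.2 fun e' he' he => ?_
    obtain ⟨v, -, rfl⟩ := Finset.mem_map.1 he
    exact htree v (hN he')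
  have hcard : E.card = (W.erase o).card := by
    rw [Finset.card_map, Finset.card_subtype, Finset.filter_ne']
  have hle := Finset.card_le_card hsub
  rw [Finset.card_union_of_disjoint hdisj, hcard] at hle
  have := Finset.pred_card_le_card_erase (s := W) (a := o)
  omega

theorem card_le_of_subset_nontreeEdges
    (hcount : ∀ W : Finset V, W.Nonempty →
      (schreierEdges (FreeGroup.of : X → FreeGroup X) W).card + 1 ≤ W.card + Fintype.card X)
    {N : Finset (X × V)} (hN : (N : Set (X × V)) ⊆ nontreeEdges o) :
    N.card ≤ Fintype.card X := by
  classical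
  let R := N.sup fun e => max (depth (X := X) o e.2) (depth (X := X) o (FreeGroup.of e.1 • e.2))
  let W := (finite_depth_le (X := X) o R).toFinset
  have hW : ∀ v, v ∈ W ↔ depth (X := X) o v ≤ R := fun v => by simp [W]
  have hNW : N ⊆ schreierEdges FreeGroup.of W := fun e he => by
    have hR := max_le_iff.1 (Finset.le_sup (f := fun e : X × V =>
      max (depth (X := X) o e.2) (depth (X := X) o (FreeGroup.of e.1 • e.2))) he)
    exact mem_schreierEdges.2 ⟨(hW _).2 hR.1, (hW _).2 hR.2⟩
  have hcard := card_add_card_le_card_schreierEdges hN hNW hW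
  have := hcount W ⟨o, (hW o).2 (by simp [depth_self])⟩
  omega

theorem finite_nontreeEdges
    (hcount : ∀ W : Finset V, W.Nonempty →
      (schreierEdges (FreeGroup.of : X → FreeGroup X) W).card + 1 ≤ W.card + Fintype.card X) :
    (nontreeEdges (X := X) o).Finite := by
  by_contra hinf
  obtain ⟨N, hN, hcard⟩ := Set.Infinite.exists_subset_card_eq hinf (Fintype.card X + 1)
  have := card_le_of_subset_nontreeEdges hcount hN
  omega

end SchreierTree

open SchreierTree in
theorem SchreierTree.generatedByAtMost_stabilizer {X V : Type*} [Fintype X]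
    [MulAction (FreeGroup X) V] [MulAction.IsPretransitive (FreeGroup X) V] {o : V}
    (hcount : ∀ W : Finset V, W.Nonempty →
      (schreierEdges (FreeGroup.of : X → FreeGroup X) W).card + 1 ≤ W.card + Fintype.card X) :
    GeneratedByAtMost (MulAction.stabilizer (FreeGroup X) o) (Fintype.card X) := by
  classical
  have hfin := finite_nontreeEdges (o := o) hcount
  let gen (e : X × V) : FreeGroup X :=
    (transversal o (FreeGroup.of e.1 • e.2))⁻¹ * (FreeGroup.of e.1 * transversal o e.2)
  refine ⟨hfin.toFinset.image gen, ?_, Finset.card_image_le.trans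
    (card_le_of_subset_nontreeEdges (o := o) hcount (by simp))⟩
  rw [← closure_schreier_eq_stabilizer (FreeGroup.closure_range_of X) (transversal_self o)
    (transversal_smul o)]
  refine le_antisymm (Subgroup.closure_mono ?_) ((Subgroup.closure_le _).2 ?_)
  · rw [Finset.coe_image]
    exact Set.image_subset_range gen _
  · rintro _ ⟨e, rfl⟩
    by_cases he : e ∈ nontreeEdges o
    · exact Subgroup.subset_closure (Finset.mem_image_of_mem gen (hfin.mem_toFinset.2 he))
    · simp [not_not.1 he, one_mem]

/-- Only the Schreier graph of the orbit of `o` matters, and there the action is transitive. -/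
theorem generatedByAtMost_stabilizer_of_card_schreierEdges_le {X T : Type*} [Fintype X]
    [MulAction (FreeGroup X) T]
    (hcount : ∀ W : Finset T, W.Nonempty →
      (schreierEdges (FreeGroup.of : X → FreeGroup X) W).card + 1 ≤ W.card + Fintype.card X)
    (o : T) : GeneratedByAtMost (MulAction.stabilizer (FreeGroup X) o) (Fintype.card X) := by
  classical
  let o' : MulAction.orbit (FreeGroup X) o := ⟨o, MulAction.mem_orbit_self o⟩
  have hstab : MulAction.stabilizer (FreeGroup X) o = MulAction.stabilizer (FreeGroup X) o' := by
    ext g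
    simp [MulAction.mem_stabilizer_iff, Subtype.ext_iff, o']
  rw [hstab]
  refine SchreierTree.generatedByAtMost_stabilizer fun W hW => ?_
  let val := Function.Embedding.subtype (· ∈ MulAction.orbit (FreeGroup X) o)
  refine le_trans (Nat.succ_le_succ ?_) ((hcount (W.map val) (by simpa using hW)).trans_eq
    (by rw [Finset.card_map]))
  refine Finset.card_le_card_of_injOn (Prod.map id val) (fun e he => ?_)
    (Function.injective_id.prodMap val.injective).injOn
  obtain ⟨he, he'⟩ := mem_schreierEdges.1 he
  exact mem_schreierEdges.2 ⟨Finset.mem_map_of_mem val he, Finset.mem_map_of_mem val he'⟩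

open scoped Pointwise in
theorem MedianPretree.IsInvariant.generatedByAtMost_stabilizer {X T : Type*} [Fintype X]
    [MulAction (FreeGroup X) T] {S : MedianPretree T} (hS : S.IsInvariant (FreeGroup X))
    (hdir : ∀ y z, z ≠ y → IsMulCommutative (MulAction.stabilizer (FreeGroup X) (S.dir y z)))
    (o : T) : GeneratedByAtMost (MulAction.stabilizer (FreeGroup X) o) (Fintype.card X) := by
  obtain ⟨claim, hclaim⟩ := exists_claim X (T × Set T)
  exact generatedByAtMost_stabilizer_of_card_schreierEdges_le (fun W hW =>
    hS.card_schreierEdges_add_one_le claim (fun y z hz => hclaim _ (hdir y z hz)) hW) o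

/-! ### The word metric and limit trees -/

section WordMetric

variable {X : Type*} [DecidableEq X] {a b z : FreeGroup X}

/-- The distance between `g` and `h` in the Cayley tree of the free group on `X`. -/
def wordDist (g h : FreeGroup X) : ℕ := (g⁻¹ * h).norm

theorem wordDist_self (g : FreeGroup X) : wordDist g g = 0 := by simp [wordDist]

theorem wordDist_comm (g h : FreeGroup X) : wordDist g h = wordDist h g := by
  rw [wordDist, wordDist, ← FreeGroup.norm_inv_eq, mul_inv_rev, inv_inv]

theorem wordDist_triangle (g h k : FreeGroup X) : wordDist g k ≤ wordDist g h + wordDist h k := by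
  simpa [wordDist, mul_assoc] using FreeGroup.norm_mul_le (g⁻¹ * h) (h⁻¹ * k)

theorem wordDist_mul_left (u g h : FreeGroup X) : wordDist (u * g) (u * h) = wordDist g h := by
  simp [wordDist, mul_assoc]

/-- The Gromov product of `g` and `h` at `1`: the length of the longest common initial segment of
their reduced words. -/
def gromovProduct (g h : FreeGroup X) : ℕ := (g.norm + h.norm - wordDist g h) / 2

theorem exists_toWord_eq_append (g h : FreeGroup X) :
    ∃ p a b, g.toWord = p ++ a ∧ h.toWord = p ++ b ∧ (∀ x ∈ a.head?, x ∉ b.head?) ∧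
      wordDist g h = a.length + b.length ∧ gromovProduct g h = p.length := by
  obtain ⟨p, a, b, hg, hh, hab, hgh⟩ := exists_toWord_inv_mul_eq g h
  have hdist : wordDist g h = a.length + b.length := by simp [wordDist, FreeGroup.norm, hgh]
  refine ⟨p, a, b, hg, hh, hab, hdist, ?_⟩
  simp only [gromovProduct, hdist, FreeGroup.norm, hg, hh, List.length_append]
  omega

theorem norm_add_norm_eq (g h : FreeGroup X) :
    g.norm + h.norm = wordDist g h + 2 * gromovProduct g h := by
  obtain ⟨p, a, b, hg, hh, -, hdist, hp⟩ := exists_toWord_eq_append g h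
  simp only [hdist, hp, FreeGroup.norm, hg, hh, List.length_append]
  omega

theorem gromovProduct_le_norm_left (g h : FreeGroup X) : gromovProduct g h ≤ g.norm := by
  obtain ⟨p, a, b, hg, -, -, -, hp⟩ := exists_toWord_eq_append g h
  simp [FreeGroup.norm, hg, hp]

theorem take_toWord_eq_of_le_gromovProduct {g h : FreeGroup X} {n : ℕ}
    (hn : n ≤ gromovProduct g h) : g.toWord.take n = h.toWord.take n := by
  obtain ⟨p, a, b, hg, hh, -, -, hp⟩ := exists_toWord_eq_append g h
  rw [hp] at hn
  rw [hg, hh, List.take_append_of_le_length hn, List.take_append_of_le_length hn]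

theorem le_gromovProduct_of_take_toWord_eq {g h : FreeGroup X} {n : ℕ} (hn : n ≤ g.norm)
    (heq : g.toWord.take n = h.toWord.take n) : n ≤ gromovProduct g h := by
  obtain ⟨p, a, b, hg, hh, hab, -, hp⟩ := exists_toWord_eq_append g h
  rw [hp]
  by_contra! hlt
  simp only [FreeGroup.norm, hg, List.length_append] at hn
  have hhead := congrArg (·[p.length]?) heq
  simp only [hg, hh, List.getElem?_take_of_lt hlt, List.getElem?_append_right le_rfl,
    Nat.sub_self, ← List.head?_eq_getElem?] at hhead
  obtain ⟨x, hx⟩ : ∃ x, x ∈ a.head? := by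
    cases a with
    | nil => exact absurd hlt (not_lt.2 (by simpa using hn))
    | cons x a => exact ⟨x, rfl⟩
  exact hab x hx (hhead ▸ hx)

theorem min_gromovProduct_le (a b c : FreeGroup X) :
    min (gromovProduct a b) (gromovProduct b c) ≤ gromovProduct a c :=
  le_gromovProduct_of_take_toWord_eq
    ((min_le_left _ _).trans (gromovProduct_le_norm_left a b))
    ((take_toWord_eq_of_le_gromovProduct (min_le_left _ _)).trans
      (take_toWord_eq_of_le_gromovProduct (min_le_right _ _)))

/-- The four-point condition: Cayley trees are `0`-hyperbolic. -/
theorem wordDist_add_wordDist_le_max (y a b c : FreeGroup X) :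
    wordDist a c + wordDist y b ≤
      max (wordDist a b + wordDist y c) (wordDist b c + wordDist y a) := by
  have hmin := min_gromovProduct_le (y⁻¹ * a) (y⁻¹ * b) (y⁻¹ * c)
  have hab := norm_add_norm_eq (y⁻¹ * a) (y⁻¹ * b)
  have hbc := norm_add_norm_eq (y⁻¹ * b) (y⁻¹ * c)
  have hac := norm_add_norm_eq (y⁻¹ * a) (y⁻¹ * c)
  simp only [wordDist_mul_left] at hab hbc hac
  simp only [wordDist] at hab hbc hac ⊢
  omega

theorem exists_wordDist_median (a b c : FreeGroup X) :
    ∃ m, wordDist a m + wordDist m b = wordDist a b ∧ wordDist a m + wordDist m c = wordDist a c ∧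
      wordDist b m + wordDist m c = wordDist b c := by
  obtain ⟨p, β, γ, hb, hc, -, hbc, -⟩ := exists_toWord_eq_append (a⁻¹ * b) (a⁻¹ * c)
  have hb' : b = a * FreeGroup.mk p * FreeGroup.mk β := by
    rw [mul_assoc, FreeGroup.mul_mk, ← hb, FreeGroup.mk_toWord, mul_inv_cancel_left]
  have hc' : c = a * FreeGroup.mk p * FreeGroup.mk γ := by
    rw [mul_assoc, FreeGroup.mul_mk, ← hc, FreeGroup.mk_toWord, mul_inv_cancel_left]
  have ham : wordDist a (a * FreeGroup.mk p) ≤ p.length := by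
    rw [wordDist, inv_mul_cancel_left]
    exact FreeGroup.norm_mk_le
  have hmb : wordDist (a * FreeGroup.mk p) b ≤ β.length := by
    rw [wordDist, hb', inv_mul_cancel_left]
    exact FreeGroup.norm_mk_le
  have hmc : wordDist (a * FreeGroup.mk p) c ≤ γ.length := by
    rw [wordDist, hc', inv_mul_cancel_left]
    exact FreeGroup.norm_mk_le
  have hab : wordDist a b = p.length + β.length := by simp [wordDist, FreeGroup.norm, hb]
  have hac : wordDist a c = p.length + γ.length := by simp [wordDist, FreeGroup.norm, hc]
  rw [wordDist_mul_left] at hbc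
  have htri_ab := wordDist_triangle a (a * FreeGroup.mk p) b
  have htri_ac := wordDist_triangle a (a * FreeGroup.mk p) c
  have htri_bc := wordDist_triangle b (a * FreeGroup.mk p) c
  rw [wordDist_comm b (a * FreeGroup.mk p)] at htri_bc
  refine ⟨a * FreeGroup.mk p, by omega, by omega, ?_⟩
  rw [wordDist_comm b (a * FreeGroup.mk p)]
  omega

theorem exists_mul_mk_take_eq {N : ℕ} (h : (a * z).toWord.take N = z.toWord.take N) :
    ∃ i j, i ≤ a.norm ∧ j ≤ a.norm ∧ ∀ n, i + n ≤ N →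
      a * FreeGroup.mk (z.toWord.take (j + n)) = FreeGroup.mk (z.toWord.take (i + n)) := by
  obtain ⟨p, α, β, ha, hz, -, haz⟩ := exists_toWord_inv_mul_eq a⁻¹ z
  rw [inv_inv] at haz
  have hnorm : a.norm = p.length + α.length := by
    rw [← FreeGroup.norm_inv_eq, FreeGroup.norm, ha, List.length_append]
  have ha' : a = (FreeGroup.mk p * FreeGroup.mk α)⁻¹ := by
    rw [FreeGroup.mul_mk, ← ha, FreeGroup.mk_toWord, inv_inv]
  refine ⟨α.length, p.length, by omega, by omega, fun n hn => ?_⟩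
  have hsource : z.toWord.take (p.length + n) = p ++ β.take n := by
    rw [hz, List.take_length_add_append]
  have htarget : z.toWord.take (α.length + n) = FreeGroup.invRev α ++ β.take n := by
    have h := congrArg (List.take (α.length + n)) h
    rw [List.take_take, List.take_take, min_eq_left hn] at h
    rw [← h, haz, ← FreeGroup.invRev_length (L₁ := α), List.take_length_add_append]
  rw [hsource, htarget, ← FreeGroup.mul_mk, ← FreeGroup.mul_mk, ← FreeGroup.inv_mk, ha']
  group

/-- Both `a` and `b` act as shifts on a long initial segment of `z`, and shifts commute. -/
theorem commute_of_le_gromovProduct {C : ℕ} (ha : a.norm ≤ C) (hb : b.norm ≤ C)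
    (haz : 2 * C ≤ gromovProduct (a * z) z) (hbz : 2 * C ≤ gromovProduct (b * z) z) :
    Commute a b := by
  obtain ⟨i, j, hi, hj, hshift⟩ :=
    exists_mul_mk_take_eq (take_toWord_eq_of_le_gromovProduct haz)
  obtain ⟨i', j', hi', hj', hshift'⟩ :=
    exists_mul_mk_take_eq (take_toWord_eq_of_le_gromovProduct hbz)
  refine mul_right_cancel (b := FreeGroup.mk (z.toWord.take (j + j'))) ?_
  rw [mul_assoc, mul_assoc, hshift j' (by omega), add_comm i j', add_comm j j',
    hshift' j (by omega), hshift' i (by omega), add_comm i' j, hshift i' (by omega), add_comm]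

theorem commute_of_wordDist_le {y : FreeGroup X} {C : ℕ} (ha : wordDist y (a * y) ≤ C)
    (hb : wordDist y (b * y) ≤ C)
    (haz : wordDist (a * z) z + 4 * C ≤ wordDist (a * z) y + wordDist y z)
    (hbz : wordDist (b * z) z + 4 * C ≤ wordDist (b * z) y + wordDist y z) : Commute a b := by
  have hprod : ∀ c : FreeGroup X, wordDist (c * z) z + 4 * C ≤ wordDist (c * z) y + wordDist y z →
      2 * C ≤ gromovProduct (y⁻¹ * c * y⁻¹⁻¹ * (y⁻¹ * z)) (y⁻¹ * z) := by
    intro c hc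
    have heq : y⁻¹ * c * y⁻¹⁻¹ * (y⁻¹ * z) = y⁻¹ * (c * z) := by group
    have hnorm := norm_add_norm_eq (y⁻¹ * (c * z)) (y⁻¹ * z)
    rw [wordDist_mul_left] at hnorm
    rw [wordDist_comm _ y] at hc
    simp only [wordDist] at hc hnorm
    rw [heq]
    omega
  rw [← Commute.conj_iff y⁻¹]
  exact commute_of_le_gromovProduct (by simpa [wordDist, mul_assoc] using ha)
    (by simpa [wordDist, mul_assoc] using hb) (hprod a haz) (hprod b hbz)

end WordMetric

section LimitTree

open Filter

variable {X : Type*} [DecidableEq X] {a b c u u' v v' w w' : ℕ → FreeGroup X}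

variable (X) in
/-- The sequences in the free group on `X` which have bounded length along a fixed nonprincipal
ultrafilter. -/
noncomputable def boundedSequences : Subgroup (ℕ → FreeGroup X) where
  carrier := {u | ∃ C, ∀ᶠ k in hyperfilter ℕ, (u k).norm ≤ C}
  one_mem' := ⟨0, by simp⟩
  inv_mem' := by
    rintro u ⟨C, hC⟩
    exact ⟨C, by simpa using hC⟩
  mul_mem' := by
    rintro u v ⟨C, hC⟩ ⟨D, hD⟩
    refine ⟨C + D, ?_⟩
    filter_upwards [hC, hD] with k hu hv
    exact (FreeGroup.norm_mul_le _ _).trans (add_le_add hu hv)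

variable (X) in
/-- Sequences in the free group on `X` up to bounded distance. With respect to
`limitPretree` this is a non-metric analogue of an asymptotic cone of the Cayley tree, on which
`ℕ → FreeGroup X` acts by left multiplication. -/
abbrev LimitTree : Type _ := (ℕ → FreeGroup X) ⧸ boundedSequences X

theorem LimitTree.mk_eq_mk_iff : (u : LimitTree X) = v ↔
    ∃ C, ∀ᶠ k in hyperfilter ℕ, wordDist (u k) (v k) ≤ C :=
  QuotientGroup.eq

/-- For almost all `k` with respect to the ultrafilter, `v k` lies between `u k` and `w k` up to a
bounded error. -/
def CoarselyBetween (u v w : ℕ → FreeGroup X) : Prop :=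
  ∃ C, ∀ᶠ k in hyperfilter ℕ,
    wordDist (u k) (v k) + wordDist (v k) (w k) ≤ wordDist (u k) (w k) + C

namespace CoarselyBetween

theorem of_mk_eq_mk (hu : (u : LimitTree X) = u') (hv : (v : LimitTree X) = v')
    (hw : (w : LimitTree X) = w') (h : CoarselyBetween u v w) : CoarselyBetween u' v' w' := by
  obtain ⟨Cu, hu⟩ := LimitTree.mk_eq_mk_iff.1 hu
  obtain ⟨Cv, hv⟩ := LimitTree.mk_eq_mk_iff.1 hv
  obtain ⟨Cw, hw⟩ := LimitTree.mk_eq_mk_iff.1 hw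
  obtain ⟨C, h⟩ := h
  refine ⟨C + 2 * (Cu + Cv + Cw), ?_⟩
  filter_upwards [hu, hv, hw, h] with k hu hv hw h
  have huv := wordDist_triangle (u' k) (u k) (v' k)
  have huv' := wordDist_triangle (u k) (v k) (v' k)
  have hvw := wordDist_triangle (v' k) (v k) (w' k)
  have hvw' := wordDist_triangle (v k) (w k) (w' k)
  have huw := wordDist_triangle (u k) (u' k) (w k)
  have huw' := wordDist_triangle (u' k) (w' k) (w k)
  rw [wordDist_comm (u' k) (u k)] at huv
  rw [wordDist_comm (v' k) (v k)] at hvw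
  rw [wordDist_comm (w' k) (w k)] at huw'
  omega

theorem left (u v : ℕ → FreeGroup X) : CoarselyBetween u u v :=
  ⟨0, by simp [wordDist_self]⟩

theorem symm (h : CoarselyBetween u v w) : CoarselyBetween w v u := by
  obtain ⟨C, h⟩ := h
  refine ⟨C, h.mono fun k h => ?_⟩
  rwa [wordDist_comm (w k) (v k), wordDist_comm (w k) (u k), wordDist_comm (v k) (u k), add_comm]

theorem left_or_right (h : CoarselyBetween a v c) (b : ℕ → FreeGroup X) :
    CoarselyBetween a v b ∨ CoarselyBetween b v c := by
  obtain ⟨C, h⟩ := h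
  refine (Ultrafilter.eventually_or.1 (h.mono fun k h => ?_)).imp (⟨C, ·⟩) (⟨C, ·⟩)
  have hmax := wordDist_add_wordDist_le_max (v k) (a k) (b k) (c k)
  rw [wordDist_comm (b k) (v k)]
  rw [wordDist_comm (v k) (a k)] at hmax
  omega

theorem mk_eq_mk (h : CoarselyBetween a u b) (h' : CoarselyBetween a b u) :
    (u : LimitTree X) = b := by
  obtain ⟨C, h⟩ := h
  obtain ⟨D, h'⟩ := h'
  refine LimitTree.mk_eq_mk_iff.2 ⟨C + D, ?_⟩
  filter_upwards [h, h'] with k h h'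
  rw [wordDist_comm (b k) (u k)] at h'
  omega

theorem mul_left (g : ℕ → FreeGroup X) (h : CoarselyBetween u v w) :
    CoarselyBetween (g * u) (g * v) (g * w) := by
  simpa [CoarselyBetween, wordDist_mul_left] using h

variable (a b c) in
theorem exists_median :
    ∃ m, CoarselyBetween a m b ∧ CoarselyBetween a m c ∧ CoarselyBetween b m c := by
  choose m hab hac hbc using fun k => exists_wordDist_median (a k) (b k) (c k)
  exact ⟨m, ⟨0, .of_forall fun k => (hab k).le⟩, ⟨0, .of_forall fun k => (hac k).le⟩,
    ⟨0, .of_forall fun k => (hbc k).le⟩⟩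

end CoarselyBetween

variable (X) in
/-- The median pretree structure on the limit tree. -/
noncomputable def limitPretree : MedianPretree (LimitTree X) where
  Between u v w := CoarselyBetween u.out v.out w.out
  left u v := .left _ _
  symm h := h.symm
  left_or_right b h := h.left_or_right b.out
  antisymm h h' := by simpa using h.mk_eq_mk h'
  exists_median a b c := by
    obtain ⟨m, hab, hac, hbc⟩ := CoarselyBetween.exists_median a.out b.out c.out
    have hm : (m : LimitTree X) = (m : LimitTree X).out := (QuotientGroup.out_eq' _).symm
    exact ⟨m, hab.of_mk_eq_mk rfl hm rfl, hac.of_mk_eq_mk rfl hm rfl, hbc.of_mk_eq_mk rfl hm rfl⟩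

theorem limitPretree_between_mk :
    (limitPretree X).Between (u : LimitTree X) v w ↔ CoarselyBetween u v w :=
  ⟨fun h => h.of_mk_eq_mk (QuotientGroup.out_eq' _) (QuotientGroup.out_eq' _)
      (QuotientGroup.out_eq' _),
    fun h => h.of_mk_eq_mk (QuotientGroup.out_eq' _).symm (QuotientGroup.out_eq' _).symm
      (QuotientGroup.out_eq' _).symm⟩

variable (X) in
theorem limitPretree_isInvariant : (limitPretree X).IsInvariant (ℕ → FreeGroup X) := by
  intro g a y b h
  induction a using QuotientGroup.induction_on
  induction y using QuotientGroup.induction_on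
  induction b using QuotientGroup.induction_on
  exact limitPretree_between_mk.2 ((limitPretree_between_mk.1 h).mul_left g)

open scoped Pointwise in
theorem eventually_wordDist_of_smul_dir_eq {g y z : ℕ → FreeGroup X}
    (hzy : (z : LimitTree X) ≠ y)
    (hg : g • (limitPretree X).dir (y : LimitTree X) z = (limitPretree X).dir y z) :
    (∃ C, ∀ᶠ k in hyperfilter ℕ, wordDist (y k) (g k * y k) ≤ C) ∧
      ∀ C, ∀ᶠ k in hyperfilter ℕ,
        wordDist (g k * z k) (z k) + C ≤ wordDist (g k * z k) (y k) + wordDist (y k) (z k) := by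
  have hgy : ((g * y : ℕ → FreeGroup X) : LimitTree X) = y := congrArg Prod.fst hg
  refine ⟨LimitTree.mk_eq_mk_iff.1 hgy.symm, fun C => ?_⟩
  have hgz : (limitPretree X).dir (y : LimitTree X) (g * z : ℕ → FreeGroup X) =
      (limitPretree X).dir y z := by
    rw [← hg, (limitPretree_isInvariant X).smul_dir]
    exact congrArg (fun p => (limitPretree X).dir p _) hgy.symm
  have hbtw := fun h => ((limitPretree X).dir_eq_dir_iff hzy).1 hgz (limitPretree_between_mk.2 h)
  have hC := Ultrafilter.eventually_not.2 fun h => hbtw ⟨C, h⟩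
  exact hC.mono fun k hk => (not_le.1 hk).le

open scoped Pointwise in
theorem eventually_commute_of_smul_dir_eq {y z : LimitTree X} (hzy : z ≠ y)
    (ha : a • (limitPretree X).dir y z = (limitPretree X).dir y z)
    (hb : b • (limitPretree X).dir y z = (limitPretree X).dir y z) :
    ∀ᶠ k in hyperfilter ℕ, Commute (a k) (b k) := by
  induction y using QuotientGroup.induction_on
  induction z using QuotientGroup.induction_on
  obtain ⟨⟨A, hay⟩, haz⟩ := eventually_wordDist_of_smul_dir_eq hzy ha
  obtain ⟨⟨B, hby⟩, hbz⟩ := eventually_wordDist_of_smul_dir_eq hzy hb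
  filter_upwards [hay, hby, haz (4 * (A + B)), hbz (4 * (A + B))] with k hay hby haz hbz
  exact commute_of_wordDist_le (hay.trans (Nat.le_add_right A B)) (hby.trans (Nat.le_add_left B A))
    haz hbz

end LimitTree

/-! ### Periodic subgroups -/

section Periodic

variable {G K : Type*} [Group G] [Group K]

theorem perSet_eq_periodicPts (φ : Monoid.End G) : perSet φ = Function.periodicPts φ := by
  ext x
  simp [perSet, Function.mem_periodicPts, Function.IsPeriodicPt, Function.IsFixedPt,
    Nat.succ_le_iff, Monoid.End.coe_pow]

/-- The periodic subgroup `Per(φ)`, with underlying set `perSet φ`. -/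
def periodicSubgroup (φ : Monoid.End G) : Subgroup G where
  carrier := perSet φ
  one_mem' := ⟨1, le_rfl, map_one _⟩
  inv_mem' := by
    rintro x ⟨n, hn, hx⟩
    exact ⟨n, hn, by rw [map_inv, hx]⟩
  mul_mem' := by
    rintro x y ⟨m, hm, hx⟩ ⟨n, hn, hy⟩
    refine ⟨m * n, Nat.mul_pos hm hn, ?_⟩
    rw [Monoid.End.coe_pow] at hx hy
    rw [map_mul, Monoid.End.coe_pow]
    exact congrArg₂ (· * ·) (Function.IsPeriodicPt.mul_const hx n)
      (Function.IsPeriodicPt.const_mul hy m)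

theorem mem_periodicSubgroup {φ : Monoid.End G} {x : G} :
    x ∈ periodicSubgroup φ ↔ x ∈ Function.periodicPts φ := by
  rw [← perSet_eq_periodicPts]
  rfl

theorem periodicSubgroup_le_range (φ : Monoid.End G) : periodicSubgroup φ ≤ MonoidHom.range φ :=
  fun _ hx => Function.periodicPts_subset_range (mem_periodicSubgroup.1 hx)

theorem map_periodicSubgroup {f : K →* G} (hf : Function.Injective f) {ψ : Monoid.End K}
    {φ : Monoid.End G} (h : Function.Semiconj f ψ φ) :
    (periodicSubgroup ψ).map f = periodicSubgroup φ ⊓ f.range := by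
  have hper : ∀ x, f x ∈ periodicSubgroup φ ↔ x ∈ periodicSubgroup ψ := by
    intro x
    simp only [mem_periodicSubgroup, Function.mem_periodicPts, Function.IsPeriodicPt,
      Function.IsFixedPt, ← (h.iterate_right _).eq, hf.eq_iff]
  ext y
  constructor
  · rintro ⟨x, hx, rfl⟩
    exact ⟨(hper x).2 hx, x, rfl⟩
  · rintro ⟨hy, x, rfl⟩
    exact ⟨x, (hper x).1 hy, rfl⟩

theorem GeneratedByAtMost.mono {H : Subgroup G} {m n : ℕ} (h : GeneratedByAtMost H m)
    (hmn : m ≤ n) : GeneratedByAtMost H n := by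
  obtain ⟨S, hS, hcard⟩ := h
  exact ⟨S, hS, hcard.trans hmn⟩

theorem GeneratedByAtMost.map {H : Subgroup K} {n : ℕ} (h : GeneratedByAtMost H n) (f : K →* G) :
    GeneratedByAtMost (H.map f) n := by
  classical
  obtain ⟨S, hS, hcard⟩ := h
  exact ⟨S.image f, by rw [Finset.coe_image, ← MonoidHom.map_closure, hS],
    Finset.card_image_le.trans hcard⟩

end Periodic

section InjectiveEndomorphism

variable {X : Type*} {φ : Monoid.End (FreeGroup X)}

open Filter in
theorem mem_periodicSubgroup_iff_mem_boundedSequences [DecidableEq X] [Finite X]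
    (hφ : Function.Injective φ) {g : FreeGroup X} :
    g ∈ periodicSubgroup φ ↔ (fun k => (φ ^ k) g) ∈ boundedSequences X := by
  rw [mem_periodicSubgroup]
  constructor
  · rintro ⟨n, hn, hg⟩
    refine ⟨∑ i ∈ Finset.range n, ((φ ^ i) g).norm, .of_forall fun k => ?_⟩
    change ((φ ^ k) g).norm ≤ _
    rw [Monoid.End.coe_pow, ← hg.iterate_mod_apply, ← Monoid.End.coe_pow]
    exact Finset.single_le_sum (f := fun i => ((φ ^ i) g).norm) (fun _ _ => Nat.zero_le _)
      (Finset.mem_range.2 (Nat.mod_lt k hn))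
  · rintro ⟨C, hC⟩
    have hinf : {k | ((φ ^ k) g).norm ≤ C}.Infinite := fun hfin => hfin.notMem_hyperfilter hC
    obtain ⟨i, -, j, -, hij, heq⟩ := hinf.exists_lt_map_eq_of_mapsTo (f := fun k => (φ ^ k) g)
      (fun _ hk => hk) (finite_norm_le C)
    simp only [Monoid.End.coe_pow] at heq
    refine ⟨j - i, Nat.sub_pos_of_lt hij, hφ.iterate i ?_⟩
    rw [← Function.iterate_add_apply, Nat.add_sub_cancel' hij.le, heq]

open scoped Pointwise in
/-- `g` acts on the limit tree through the sequence `φ ^ k g`. -/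
theorem generatedByAtMost_periodicSubgroup_of_injective [Fintype X]
    (hφ : Function.Injective φ) :
    GeneratedByAtMost (periodicSubgroup φ) (Fintype.card X) := by
  classical
  let orbit : FreeGroup X →* ℕ → FreeGroup X := MonoidHom.pi fun k => φ ^ k
  let _ : MulAction (FreeGroup X) (LimitTree X) := MulAction.compHom _ orbit
  have hS : (limitPretree X).IsInvariant (FreeGroup X) :=
    fun g => limitPretree_isInvariant X (orbit g)
  have hdir : ∀ y z, z ≠ y →
      IsMulCommutative (MulAction.stabilizer (FreeGroup X) ((limitPretree X).dir y z)) := by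
    refine fun y z hzy => ⟨⟨fun g h => Subtype.ext ?_⟩⟩
    have hcomm := eventually_commute_of_smul_dir_eq (a := orbit g) (b := orbit h) hzy g.2 h.2
    obtain ⟨k, hk⟩ := hcomm.exists
    have hφk : Function.Injective (φ ^ k) := by
      rw [Monoid.End.coe_pow]
      exact hφ.iterate k
    refine hφk ?_
    rw [Subgroup.coe_mul, Subgroup.coe_mul, map_mul, map_mul]
    exact hk.eq
  have hper : MulAction.stabilizer (FreeGroup X) ((1 : ℕ → FreeGroup X) : LimitTree X) =
      periodicSubgroup φ := by
    ext g
    exact (SetLike.ext_iff.1 (MulAction.stabilizer_quotient (boundedSequences X)) (orbit g)).trans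
      (mem_periodicSubgroup_iff_mem_boundedSequences hφ).symm
  exact hper ▸ hS.generatedByAtMost_stabilizer hdir _

end InjectiveEndomorphism

/-! ### Ranks of free groups and the Hopf property -/

section Hopf

theorem exists_perm_forall_mul_mem {G : Type*} [Group G] (S : Set G) [Finite S] (g : G) :
    ∃ σ : Equiv.Perm S, ∀ h : S, g * h ∈ S → (σ h : G) = g * h := by
  classical
  have := Fintype.ofFinite S
  let f : {h : S // g * h ∈ S} → S := fun h => ⟨g * h.1, h.2⟩
  have hf : Function.Injective f := fun h k heq =>
    Subtype.ext (Subtype.ext (mul_left_cancel (congrArg Subtype.val heq)))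
  refine ⟨(Equiv.ofInjective f hf).extendSubtype, fun h hgh => ?_⟩
  rw [Equiv.extendSubtype_apply_of_mem _ h hgh]
  rfl

theorem lift_perm_mk_apply_one {X : Type*} {S : Set (FreeGroup X)} {σ : X → Equiv.Perm S}
    (hσ : ∀ x (h : S), FreeGroup.of x * h.1 ∈ S → (σ x h : FreeGroup X) = FreeGroup.of x * h)
    (h1 : 1 ∈ S) {w : List (X × Bool)} (hw : ∀ v, v <:+ w → FreeGroup.mk v ∈ S) :
    (FreeGroup.lift σ (FreeGroup.mk w) ⟨1, h1⟩ : FreeGroup X) = FreeGroup.mk w := by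
  induction w with
  | nil => rfl
  | cons a w ih =>
    have hmem : ∀ v, v <:+ w → FreeGroup.mk v ∈ S := fun v hv =>
      hw v (hv.trans (List.suffix_cons a w))
    have hmk : FreeGroup.mk (a :: w) = FreeGroup.mk [a] * FreeGroup.mk w := by
      rw [FreeGroup.mul_mk, List.singleton_append]
    have hw' : FreeGroup.lift σ (FreeGroup.mk w) ⟨1, h1⟩ = ⟨_, hmem w List.suffix_rfl⟩ :=
      Subtype.ext (ih hmem)
    have haw := hw _ (List.suffix_refl (a :: w))
    rw [hmk, map_mul, Equiv.Perm.mul_apply, hw']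
    rw [hmk] at haw
    obtain ⟨x, _ | _⟩ := a
    · change ((FreeGroup.lift σ (FreeGroup.of x)⁻¹ _ : S) : FreeGroup X) = (FreeGroup.of x)⁻¹ * _
      have hcancel : FreeGroup.of x * ((FreeGroup.of x)⁻¹ * FreeGroup.mk w) = FreeGroup.mk w :=
        mul_inv_cancel_left _ _
      have hσx : σ x ⟨(FreeGroup.of x)⁻¹ * FreeGroup.mk w, haw⟩ = ⟨_, hmem w List.suffix_rfl⟩ :=
        Subtype.ext ((hσ x _ (hcancel.symm ▸ hmem w List.suffix_rfl)).trans hcancel)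
      rw [map_inv, FreeGroup.lift_apply_of, Equiv.Perm.inv_eq_iff_eq.2 hσx.symm]
    · change ((FreeGroup.lift σ (FreeGroup.of x) _ : S) : FreeGroup X) = FreeGroup.of x * _
      rw [FreeGroup.lift_apply_of]
      exact hσ x _ haw

theorem exists_finite_monoidHom_apply_ne_one {X : Type*} {g : FreeGroup X} (hg : g ≠ 1) :
    ∃ (S : Set (FreeGroup X)) (_ : Finite S) (ρ : FreeGroup X →* Equiv.Perm S), ρ g ≠ 1 := by
  classical
  let S : Set (FreeGroup X) := FreeGroup.mk '' {v | v <:+ g.toWord}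
  have hS : Finite S := by
    simp only [S, ← List.mem_tails]
    exact (g.toWord.tails.finite_toSet.image _).to_subtype
  choose σ hσ using fun x : X => exists_perm_forall_mul_mem S (FreeGroup.of x)
  refine ⟨S, hS, FreeGroup.lift σ, fun hρ => hg ?_⟩
  have h1 : (1 : FreeGroup X) ∈ S := ⟨[], List.nil_suffix, rfl⟩
  have hone := lift_perm_mk_apply_one hσ h1 fun v (hv : v <:+ g.toWord) => ⟨v, hv, rfl⟩
  rw [FreeGroup.mk_toWord, hρ] at hone
  exact hone.symm

open IsFreeGroup

variable {G F H : Type*} [Group G] [Group F] [Group H] [IsFreeGroup F] [IsFreeGroup H]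

variable (F) in
theorem residuallyFinite_of_isFreeGroup : Group.ResiduallyFinite F := by
  refine Group.residuallyFinite_of_forall_exists_finite_monoidHom fun g hg => ?_
  obtain ⟨S, hS, ρ, hρ⟩ := exists_finite_monoidHom_apply_ne_one
    ((map_ne_one_iff (toFreeGroup F) (toFreeGroup F).injective).2 hg)
  exact ⟨Equiv.Perm S, inferInstance, inferInstance, ρ.comp (toFreeGroup F).toMonoidHom, hρ⟩

variable (G) in
theorem finite_monoidHom (Q : Type*) [Group.FG G] [Group Q] [Finite Q] : Finite (G →* Q) := by
  obtain ⟨S, hS⟩ := Group.fg_def.1 ‹Group.FG G›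
  exact Finite.of_injective (fun (f : G →* Q) (s : S) => f s) fun f f' h =>
    MonoidHom.eq_of_eqOn_dense hS fun s hs => congrFun h ⟨s, hs⟩

/-- Precomposition with `f` is injective, hence surjective, on the finite set of homomorphisms to a
finite group, so every such homomorphism kills the kernel of `f`. -/
theorem injective_of_surjective_of_residuallyFinite [Group.FG G] [Group.ResiduallyFinite G]
    {f : G →* G} (hf : Function.Surjective f) : Function.Injective f := by
  refine (injective_iff_map_eq_one f).2 fun g hg => ?_
  refine Group.eq_one_iff_forall_finiteIndexNormalSubroup g fun N => ?_
  have := finite_monoidHom G (G ⧸ N.toSubgroup)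
  have hcomp : Function.Injective fun θ : G →* G ⧸ N.toSubgroup => θ.comp f :=
    fun θ θ' h => (MonoidHom.cancel_right hf).1 h
  obtain ⟨θ, hθ⟩ := Finite.surjective_of_injective hcomp (QuotientGroup.mk' N.toSubgroup)
  have hgN : QuotientGroup.mk' N.toSubgroup g = 1 := by
    rw [← hθ]
    exact (congrArg θ hg).trans (map_one θ)
  exact (QuotientGroup.eq_one_iff g).1 hgN

theorem finite_and_card_le_of_surjective {X Y : Type*} [Finite X] {f : FreeGroup X →* FreeGroup Y}
    (hf : Function.Surjective f) : Finite Y ∧ Nat.card Y ≤ Nat.card X := by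
  let fab : FreeAbelianGroup X →ₗ[ℤ] FreeAbelianGroup Y :=
    (MonoidHom.toAdditive (Abelianization.map f)).toIntLinearMap
  have hfab : Function.Surjective fab := fun y => by
    obtain ⟨y, rfl⟩ := QuotientGroup.mk_surjective (s := commutator (FreeGroup Y)) y
    obtain ⟨x, rfl⟩ := hf y
    exact ⟨Abelianization.of x, Abelianization.map_of f x⟩
  have := Module.Finite.of_basis (FreeAbelianGroup.basis X)
  have := Module.Finite.of_surjective fab hfab
  refine ⟨Module.Finite.finite_basis (FreeAbelianGroup.basis Y), ?_⟩
  rw [← Module.finrank_eq_nat_card_basis (FreeAbelianGroup.basis X),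
    ← Module.finrank_eq_nat_card_basis (FreeAbelianGroup.basis Y)]
  exact LinearMap.finrank_le_finrank_of_surjective hfab

variable (F) in
theorem finite_generators [Group.FG F] : Finite (Generators F) := by
  obtain ⟨S, hS, f, hf⟩ := Group.fg_iff_exists_freeGroup_hom_surjective_finite.1 ‹Group.FG F›
  exact (finite_and_card_le_of_surjective (f := (toFreeGroup F).toMonoidHom.comp f)
    ((toFreeGroup F).surjective.comp hf)).1

theorem card_generators_lt_of_surjective [Group.FG F] {f : F →* H} (hf : Function.Surjective f)
    (hinj : ¬ Function.Injective f) : Nat.card (Generators H) < Nat.card (Generators F) := by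
  have := finite_generators F
  obtain ⟨hfin, hle⟩ := finite_and_card_le_of_surjective
    (f := ((toFreeGroup H).toMonoidHom.comp f).comp (toFreeGroup F).symm.toMonoidHom)
    (((toFreeGroup H).surjective.comp hf).comp (toFreeGroup F).symm.surjective)
  refine lt_of_le_of_ne hle fun heq => hinj ?_
  obtain ⟨c⟩ := Finite.card_eq.1 heq
  let e : H ≃* F :=
    (toFreeGroup H).trans ((FreeGroup.freeGroupCongr c).trans (toFreeGroup F).symm)
  have := residuallyFinite_of_isFreeGroup F
  have hef : Function.Injective (e ∘ f) :=
    injective_of_surjective_of_residuallyFinite (f := e.toMonoidHom.comp f) (e.surjective.comp hf)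
  exact hef.of_comp

end Hopf

/-! ### Periodic subgroups of virtually free groups -/

section VirtuallyFree

open IsFreeGroup

variable {F G : Type*} [Group F] [Group G]

theorem generatedByAtMost_periodicSubgroup_of_isFreeGroup_of_injective [IsFreeGroup F]
    [Group.FG F] {φ : Monoid.End F} (hφ : Function.Injective φ) :
    GeneratedByAtMost (periodicSubgroup φ) (Nat.card (Generators F)) := by
  have := finite_generators F
  have := Fintype.ofFinite (Generators F)
  let e := toFreeGroup F
  let ψ : Monoid.End (FreeGroup (Generators F)) :=
    e.toMonoidHom.comp (MonoidHom.comp φ e.symm.toMonoidHom)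
  have hψ : Function.Injective ψ := e.injective.comp (hφ.comp e.symm.injective)
  have hsemi : Function.Semiconj e.symm ψ φ := fun x => e.symm_apply_apply _
  have hmap := map_periodicSubgroup (f := e.symm.toMonoidHom) e.symm.injective hsemi
  rw [MonoidHom.range_eq_top.2 e.symm.surjective, inf_top_eq] at hmap
  rw [← hmap, Nat.card_eq_fintype_card]
  exact (generatedByAtMost_periodicSubgroup_of_injective hψ).map _

theorem generatedByAtMost_periodicSubgroup_of_isFreeGroup [IsFreeGroup F] [Group.FG F]
    (φ : Monoid.End F) : GeneratedByAtMost (periodicSubgroup φ) (Nat.card (Generators F)) := by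
  induction hr : Nat.card (Generators F) using Nat.strong_induction_on generalizing F with
  | _ r ih =>
    subst hr
    by_cases hφ : Function.Injective φ
    · exact generatedByAtMost_periodicSubgroup_of_isFreeGroup_of_injective hφ
    let H := MonoidHom.range φ
    have : Group.FG H := Group.fg_of_surjective (MonoidHom.rangeRestrict_surjective φ)
    let ψ : Monoid.End H := (MonoidHom.rangeRestrict φ).comp H.subtype
    have hlt : Nat.card (Generators H) < Nat.card (Generators F) :=
      card_generators_lt_of_surjective (MonoidHom.rangeRestrict_surjective φ) fun h =>
        hφ (MonoidHom.rangeRestrict_injective_iff.1 h)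
    have hmap := map_periodicSubgroup (f := H.subtype) (ψ := ψ) (φ := φ) H.subtype_injective
      fun _ => rfl
    rw [H.range_subtype, inf_eq_left.2 (periodicSubgroup_le_range φ)] at hmap
    rw [← hmap]
    exact ((ih _ hlt ψ rfl).map _).mono hlt.le

theorem GeneratedByAtMost.of_inf_of_finiteIndex {H N : Subgroup G} [N.FiniteIndex] {m : ℕ}
    (h : GeneratedByAtMost (H ⊓ N) m) : GeneratedByAtMost H (m + N.index) := by
  classical
  obtain ⟨S, hS, hcard⟩ := h
  have := Fintype.ofFinite (G ⧸ N)
  have hrep : ∀ q : G ⧸ N, ∃ g ∈ H, ∀ h ∈ H, (h : G ⧸ N) = q → (g : G ⧸ N) = q := by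
    intro q
    by_cases hq : ∃ h ∈ H, (h : G ⧸ N) = q
    · obtain ⟨h, hh, hhq⟩ := hq
      exact ⟨h, hh, fun _ _ _ => hhq⟩
    · exact ⟨1, one_mem H, fun h hh hhq => absurd ⟨h, hh, hhq⟩ hq⟩
  choose rep hrepH hrep using hrep
  refine ⟨S ∪ Finset.univ.image rep, le_antisymm ?_ fun h hh => ?_, ?_⟩
  · rw [Finset.coe_union, Subgroup.closure_union, hS, sup_le_iff, Subgroup.closure_le]
    refine ⟨inf_le_left, ?_⟩
    simpa [Set.range_subset_iff] using hrepH
  · have hrepN : (rep h)⁻¹ * h ∈ N := QuotientGroup.eq.1 (hrep _ h hh rfl)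
    have hmem : (rep h)⁻¹ * h ∈ Subgroup.closure (S : Set G) := by
      rw [hS]
      exact ⟨H.mul_mem (H.inv_mem (hrepH _)) hh, hrepN⟩
    rw [← mul_inv_cancel_left (rep h) h, Finset.coe_union, Subgroup.closure_union]
    exact mul_mem (Subgroup.mem_sup_right (Subgroup.subset_closure (by simp)))
      (Subgroup.mem_sup_left hmem)
  · rw [Subgroup.index, Nat.card_eq_fintype_card]
    exact (Finset.card_union_le _ _).trans (add_le_add hcard Finset.card_image_le)

theorem exists_le_finiteIndex_forall_le_comap [Group.FG G] (F : Subgroup G) [F.FiniteIndex] :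
    ∃ N ≤ F, N.FiniteIndex ∧ ∀ φ : Monoid.End G, N ≤ N.comap φ := by
  have := finite_monoidHom G (Equiv.Perm (G ⧸ F))
  refine ⟨⨅ f : G →* Equiv.Perm (G ⧸ F), f.ker, ?_,
    Subgroup.finiteIndex_iInf fun f => inferInstance, fun φ g hg => ?_⟩
  · refine (iInf_le _ (MulAction.toPermHom G (G ⧸ F))).trans ?_
    rw [← Subgroup.normalCore_eq_ker]
    exact F.normalCore_le
  · exact Subgroup.mem_iInf.2 fun f => Subgroup.mem_iInf.1 hg (MonoidHom.comp f φ)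

end VirtuallyFree

/-- if `G` is a finitely generated group with a free subgroup of finite
index, then there is a constant `M > 0` such that for every endomorphism `φ` of `G` the
periodic subgroup `Per(φ)` is generated by at most `M` elements. -/
theorem perSet_uniformly_fg_of_virtually_free {G : Type*} [Group G] [Group.FG G]
    (F : Subgroup G) [IsFreeGroup ↥F] [F.FiniteIndex] :
    ∃ M : ℕ, 0 < M ∧ ∀ φ : Monoid.End G,
      ∃ S : Finset G, (Subgroup.closure (S : Set G) : Set G) = perSet φ ∧ S.card ≤ M := by
  obtain ⟨N, hNF, hN, hinv⟩ := exists_le_finiteIndex_forall_le_comap F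
  have : IsFreeGroup N := IsFreeGroup.ofMulEquiv (Subgroup.subgroupOfEquivOfLe hNF)
  refine ⟨Nat.card (IsFreeGroup.Generators N) + N.index, ?_, fun φ => ?_⟩
  · exact Nat.add_pos_right _ (Nat.pos_of_ne_zero hN.index_ne_zero)
  let ψ : Monoid.End N := (MonoidHom.comp φ N.subtype).codRestrict N fun x => hinv φ x.2
  have hψ : (periodicSubgroup ψ).map N.subtype = periodicSubgroup φ ⊓ N := by
    rw [map_periodicSubgroup N.subtype_injective fun _ => rfl, N.range_subtype]
  have hinf : GeneratedByAtMost (periodicSubgroup φ ⊓ N) _ :=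
    hψ ▸ (generatedByAtMost_periodicSubgroup_of_isFreeGroup ψ).map N.subtype
  obtain ⟨S, hS, hcard⟩ := hinf.of_inf_of_finiteIndex
  exact ⟨S, congrArg SetLike.coe hS, hcard⟩
end

section
/- Let F be a free group and let K_1, K_2 be finitely generated nontrivial subgroups of F. Then rk(K_1 ∩ K_2) ≤ (rk(K_1) − 1)(rk(K_2) − 1) + 1 (the strengthened Hanna Neumann Conjecture, proved by Friedman and Mineyev). -/
/-- The rank of a subgroup: the minimal cardinality of a finite generating set. -/
noncomputable def Subgroup.rk {G : Type*} [Group G] (H : Subgroup G) : ℕ :=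
  sInf {n : ℕ | ∃ S : Finset G, Subgroup.closure (S : Set G) = H ∧ S.card = n}

/-!
The proof replaces the `L²`-dimensions of Mineyev's argument by dimensions over skew fields. A free
group `F` is bi-ordered, being faithfully represented by unipotent power series. For a subgroup `H`,
the series on `H` with well-ordered support form a division ring `D_H` (Malcev, Neumann), which acts
on the series on any ordered set on which `F` acts compatibly. The dimension over `D_H` of a
subspace `V` is the number of `H`-orbits of leading exponents of the elements of `V`.

On the edges of the Cayley graph of `F`, take the span over `D_H` of the Fox derivatives of `H`.
It has dimension `rk H`: derivatives of generators span, and those of a basis are independent. The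
boundary map sends it onto a line if `H ≠ 1`, so its subspace of cycles has dimension `rk H - 1`.
The cycles of `K₁ ⊓ K₂` are cycles of `K₁` and of `K₂`, and since `F` acts freely, an orbit of
`K₁ ⊓ K₂` is determined by the orbits of `K₁` and of `K₂` that contain it. Counting orbits of
leading exponents gives `rk (K₁ ⊓ K₂) - 1 ≤ (rk K₁ - 1) * (rk K₂ - 1)`.
-/

namespace HannaNeumann

/-! ### Bi-orders on free groups -/

section BiOrders

open Polynomial

theorem exists_biorder_of_cone {G : Type*} [Group G] (P : Subsemigroup G) (one_notMem : (1 : G) ∉ P)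
    (conj_mem : ∀ a ∈ P, ∀ g, g * a * g⁻¹ ∈ P) (mem_or_inv_mem : ∀ a ≠ 1, a ∈ P ∨ a⁻¹ ∈ P) :
    ∃ _ : LinearOrder G, MulLeftMono G ∧ MulRightMono G := by
  let order : LinearOrder G :=
    { le := fun a b => a = b ∨ a⁻¹ * b ∈ P
      le_refl := fun a => Or.inl rfl
      le_trans := by
        rintro a b c (rfl | hab) (rfl | hbc)
        · exact Or.inl rfl
        · exact Or.inr hbc
        · exact Or.inr hab
        · exact Or.inr (by simpa [mul_assoc] using P.mul_mem hab hbc)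
      le_antisymm := by
        rintro a b (rfl | hab) (hba | hba)
        · rfl
        · rfl
        · exact hba.symm
        · exact absurd (by simpa [mul_assoc] using P.mul_mem hab hba) one_notMem
      le_total := by
        intro a b
        by_cases hab : a⁻¹ * b = 1
        · exact Or.inl (Or.inl (inv_mul_eq_one.1 hab))
        · rcases mem_or_inv_mem _ hab with h | h
          · exact Or.inl (Or.inr h)
          · exact Or.inr (Or.inr (by simpa using h))
      toDecidableLE := Classical.decRel _ }
  refine ⟨order, ⟨fun c a b => ?_⟩, ⟨fun c a b => ?_⟩⟩
  · rintro (rfl | hab)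
    · exact le_rfl
    · exact Or.inr (by simpa [mul_assoc] using hab)
  · rintro (rfl | hab)
    · exact le_rfl
    · exact Or.inr (by simpa [Function.swap, mul_assoc] using conj_mem _ hab c⁻¹)

section InitialTerm

variable {A : Type*} [Ring A] {p q : A[X]} {k l : ℕ} {a b : A}

/-- The polynomial `p` is `a T ^ k` plus terms of higher degree; the coefficient `a` may vanish. -/
def HasInitialTerm (p : A[X]) (k : ℕ) (a : A) : Prop :=
  p.coeff k = a ∧ ∀ i < k, p.coeff i = 0

namespace HasInitialTerm

theorem of_coeff_zero_eq (h : p.coeff 0 = a) : HasInitialTerm p 0 a :=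
  ⟨h, fun _ hi => absurd hi (Nat.not_lt_zero _)⟩

theorem neg (hp : HasInitialTerm p k a) : HasInitialTerm (-p) k (-a) :=
  ⟨by rw [coeff_neg, hp.1], fun i hi => by rw [coeff_neg, hp.2 i hi, neg_zero]⟩

theorem add (hp : HasInitialTerm p k a) (hq : HasInitialTerm q k b) :
    HasInitialTerm (p + q) k (a + b) :=
  ⟨by rw [coeff_add, hp.1, hq.1], fun i hi => by rw [coeff_add, hp.2 i hi, hq.2 i hi, add_zero]⟩

theorem add_of_lt (hp : HasInitialTerm p k a) (hq : HasInitialTerm q l b) (hkl : k < l) :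
    HasInitialTerm (p + q) k a := by
  simpa using hp.add (b := 0) ⟨hq.2 k hkl, fun i hi => hq.2 i (hi.trans hkl)⟩

theorem mul (hp : HasInitialTerm p k a) (hq : HasInitialTerm q l b) :
    HasInitialTerm (p * q) (k + l) (a * b) := by
  refine ⟨?_, fun i hi => ?_⟩
  · rw [coeff_mul, Finset.sum_eq_single (k, l), hp.1, hq.1]
    · rintro ⟨i, j⟩ hij hne
      rw [Finset.HasAntidiagonal.mem_antidiagonal] at hij
      rcases lt_or_ge i k with hi | hi
      · simp [hp.2 i hi]
      · have hj : j < l := by grind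
        simp [hq.2 j hj]
    · simp
  · rw [coeff_mul]
    refine Finset.sum_eq_zero fun ij hij => ?_
    rw [Finset.HasAntidiagonal.mem_antidiagonal] at hij
    rcases lt_or_ge ij.1 k with h | h
    · simp [hp.2 _ h]
    · simp [hq.2 ij.2 (by lia)]

end HasInitialTerm

theorem exists_hasInitialTerm (hp : p ≠ 0) : ∃ k, ∃ a ≠ 0, HasInitialTerm p k a := by
  classical
  have hex : ∃ k, p.coeff k ≠ 0 := by
    by_contra! h
    exact hp (Polynomial.ext (by simpa using h))
  exact ⟨Nat.find hex, _, Nat.find_spec hex, rfl, fun i hi => not_not.1 (Nat.find_min hex hi)⟩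

/-- The first nonvanishing coefficient of `p` is positive. -/
def HasPositiveInitialTerm [LinearOrder A] (p : A[X]) : Prop :=
  ∃ k a, HasInitialTerm p k a ∧ 0 < a

variable [LinearOrder A] [IsOrderedAddMonoid A]

theorem HasPositiveInitialTerm.add (hp : HasPositiveInitialTerm p)
    (hq : HasPositiveInitialTerm q) : HasPositiveInitialTerm (p + q) := by
  obtain ⟨k, a, hka, ha⟩ := hp
  obtain ⟨l, b, hlb, hb⟩ := hq
  rcases lt_trichotomy k l with hkl | rfl | hlk
  · exact ⟨k, a, hka.add_of_lt hlb hkl, ha⟩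
  · exact ⟨k, a + b, hka.add hlb, add_pos ha hb⟩
  · exact ⟨l, b, add_comm p q ▸ hlb.add_of_lt hka hlk, hb⟩

theorem exists_biorder_of_unipotent {G : Type*} [Group G] (μ : G →* A[X])
    (hμ : Function.Injective μ) (hμ_coeff : ∀ g, (μ g).coeff 0 = 1) :
    ∃ _ : LinearOrder G, MulLeftMono G ∧ MulRightMono G := by
  have hμ_init (g) : HasInitialTerm (μ g) 0 1 := .of_coeff_zero_eq (hμ_coeff g)
  let P : Subsemigroup G :=
    { carrier := {g | HasPositiveInitialTerm (μ g - 1)}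
      mul_mem' := by
        rintro g h ⟨k, a, hka, ha⟩ hh
        have key : μ (g * h) - 1 = (μ g - 1) * μ h + (μ h - 1) := by rw [map_mul]; noncomm_ring
        change HasPositiveInitialTerm _
        exact key ▸ .add ⟨k, a, by simpa using hka.mul (hμ_init h), ha⟩ hh }
  refine exists_biorder_of_cone P ?_ ?_ ?_
  · rintro ⟨k, a, ⟨hk, -⟩, ha⟩
    simp [← hk] at ha
  · rintro g ⟨k, a, hka, ha⟩ h
    have key : μ (h * g * h⁻¹) - 1 = μ h * (μ g - 1) * μ h⁻¹ := by
      rw [mul_sub, sub_mul, mul_one, ← map_mul, ← map_mul, ← map_mul, mul_inv_cancel, map_one]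
    exact ⟨k, a, key ▸ by simpa using ((hμ_init h).mul hka).mul (hμ_init h⁻¹), ha⟩
  · intro g hg
    have hne : μ g - 1 ≠ 0 := by rwa [sub_ne_zero, Ne, hμ.eq_iff' (map_one μ)]
    obtain ⟨k, a, ha, hka⟩ := exists_hasInitialTerm hne
    rcases ha.lt_or_gt with ha | ha
    · have key : μ g⁻¹ - 1 = -(μ g⁻¹ * (μ g - 1)) := by
        rw [mul_sub, ← map_mul, inv_mul_cancel, map_one, mul_one, neg_sub]
      exact Or.inr ⟨k, -a, key ▸ by simpa using ((hμ_init g⁻¹).mul hka).neg, neg_pos.2 ha⟩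
    · exact Or.inl ⟨k, a, hka, ha⟩

end InitialTerm

theorem exists_isOrderedAddMonoid_of_injective {A I : Type*} [AddCommGroup A] (j : A →+ (I → ℤ))
    (hj : Function.Injective j) : ∃ _ : LinearOrder A, IsOrderedAddMonoid A := by
  obtain ⟨_, _⟩ := exists_wellFoundedLT I
  let lexJ : A → Lex (I → ℤ) := fun a => toLex (j a)
  let order : LinearOrder A := LinearOrder.lift' lexJ fun a b h => hj (toLex.injective h)
  exact ⟨order, Function.Injective.isOrderedAddMonoid lexJ (fun a b => by simp [lexJ]) Iff.rfl⟩

section Magnus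

variable {X : Type*}

open Classical in
/-- The operator `u ↦ x u` on formal sums of words without repeated consecutive letters:
the words starting with `x` are sent to zero, so that the operator has square zero. -/
noncomputable def prepend (x : X) : Module.End ℤ (List X → ℤ) where
  toFun u
    | [] => 0
    | y :: w => if y = x ∧ w.head? ≠ some x then u w else 0
  map_add' u v := by
    funext w
    cases w with
    | nil => simp
    | cons y w => by_cases h : y = x ∧ w.head? ≠ some x <;> simp [h]
  map_smul' c u := by
    funext w
    cases w with
    | nil => simp
    | cons y w => by_cases h : y = x ∧ w.head? ≠ some x <;> simp [h]

theorem prepend_nil (x : X) (u : List X → ℤ) : prepend x u [] = 0 := rfl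

open Classical in
theorem prepend_cons (x y : X) (w : List X) (u : List X → ℤ) :
    prepend x u (y :: w) = if y = x ∧ w.head? ≠ some x then u w else 0 := rfl

theorem prepend_mul_prepend (x : X) : prepend x * prepend x = 0 := by
  ext u w
  obtain _ | ⟨y, _ | ⟨z, w⟩⟩ := w
  · rfl
  · simp only [Module.End.mul_apply, prepend_cons, prepend_nil, ite_self]
    rfl
  · rw [Module.End.mul_apply, prepend_cons, prepend_cons]
    simp only [List.head?_cons, LinearMap.zero_apply, Pi.zero_apply]
    grind

theorem prepend_prepend (x : X) (u : List X → ℤ) : prepend x (prepend x u) = 0 :=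
  LinearMap.congr_fun (prepend_mul_prepend x) u

/-- The unit `1 + a`, for `a` of square zero. -/
@[simps]
def unitOneAdd {A : Type*} [Ring A] (a : A) (ha : a * a = 0) : Aˣ where
  val := 1 + a
  inv := 1 - a
  val_inv := by rw [mul_sub, mul_one, add_mul, one_mul, ha]; abel
  inv_val := by rw [mul_add, mul_one, sub_mul, one_mul, ha]; abel

/-- The action of the free group in which the generator `x` acts as `1 + prepend x`. -/
noncomputable def wordRep (X : Type*) : FreeGroup X →* Module.End ℤ (List X → ℤ) :=
  (Units.coeHom _).comp
    (FreeGroup.lift fun x => unitOneAdd (prepend x) (prepend_mul_prepend x))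

theorem C_mul_X_mul_C_mul_X_eq_zero {A : Type*} [Ring A] {a : A} (ha : a * a = 0) :
    C a * (Polynomial.X : A[X]) * (C a * Polynomial.X) = 0 := by
  rw [mul_assoc, ← mul_assoc Polynomial.X, X_mul_C, mul_assoc, ← mul_assoc, ← C_mul, ha, C_0,
    zero_mul]

/-- The graded form of `wordRep`: the generator `x` acts as `1 + prepend x * T`. -/
noncomputable def magnusRep (X : Type*) : FreeGroup X →* (Module.End ℤ (List X → ℤ))[X] :=
  (Units.coeHom _).comp (FreeGroup.lift fun x =>
    unitOneAdd (C (prepend x) * Polynomial.X)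
      (C_mul_X_mul_C_mul_X_eq_zero (prepend_mul_prepend x)))

theorem wordRep_of (x : X) : wordRep X (FreeGroup.of x) = 1 + prepend x := by
  simp [wordRep]

theorem wordRep_of_inv (x : X) : wordRep X (FreeGroup.of x)⁻¹ = 1 - prepend x := by
  simp [wordRep, unitOneAdd]

theorem magnusRep_of (x : X) :
    magnusRep X (FreeGroup.of x) = 1 + C (prepend x) * Polynomial.X := by
  simp [magnusRep]

theorem constantCoeff_magnusRep (g : FreeGroup X) : (magnusRep X g).coeff 0 = 1 := by
  have h : constantCoeff.toMonoidHom.comp (magnusRep X) = 1 := by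
    ext1 x
    simp [magnusRep_of]
  simpa using DFunLike.congr_fun h g

theorem eval_one_magnusRep (g : FreeGroup X) :
    eval₂RingHom' (RingHom.id _) 1 (fun _ => Commute.one_right _) (magnusRep X g) =
      wordRep X g := by
  have h : (eval₂RingHom' (RingHom.id _) 1 fun _ => Commute.one_right _).toMonoidHom.comp
      (magnusRep X) = wordRep X := by
    ext1 x
    simp [magnusRep_of, wordRep_of]
  exact DFunLike.congr_fun h g

/-- `w` is a word of maximal length in the support of `u`. -/
def IsLongest (u : List X → ℤ) (w : List X) : Prop :=
  u w ≠ 0 ∧ ∀ w', w.length < w'.length → u w' = 0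

theorem IsLongest.add_smul_prepend {u : List X → ℤ} {w : List X} (hw : IsLongest u w) {x : X}
    (hx : w.head? ≠ some x) {c : ℤ} (hc : c ≠ 0) : IsLongest (u + c • prepend x u) (x :: w) := by
  refine ⟨?_, fun w' hw' => ?_⟩
  · simp [hw.2 (x :: w) (by simp), prepend_cons, hx, hc, hw.1]
  · obtain _ | ⟨y, w'⟩ := w'
    · simp at hw'
    · rw [List.length_cons, List.length_cons] at hw'
      simp [hw.2 (y :: w') (by rw [List.length_cons]; lia), prepend_cons, hw.2 w' (by lia)]

/-- The sign of the exponent of a letter in a word representing an element of the free group. -/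
def exponent (b : Bool) : ℤ := cond b 1 (-1)

theorem exponent_mul_self (b : Bool) : exponent b * exponent b = 1 := by
  cases b <;> rfl

theorem wordRep_mk_cons (x : X) (b : Bool) (L : List (X × Bool)) (u : List X → ℤ) :
    wordRep X (FreeGroup.mk ((x, b) :: L)) u =
      wordRep X (FreeGroup.mk L) u + exponent b • prepend x (wordRep X (FreeGroup.mk L) u) := by
  have h : FreeGroup.mk ((x, b) :: L) = FreeGroup.mk [(x, b)] * FreeGroup.mk L := by
    rw [FreeGroup.mul_mk, List.singleton_append]
  rw [h, map_mul, Module.End.mul_apply]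
  cases b
  · have hx : FreeGroup.mk [(x, false)] = (FreeGroup.of x)⁻¹ := rfl
    simp [hx, wordRep_of_inv, exponent, sub_eq_add_neg]
  · have hx : FreeGroup.mk [(x, true)] = FreeGroup.of x := rfl
    simp [hx, wordRep_of, exponent]

theorem isLongest_wordRep_nil [DecidableEq X] :
    IsLongest (wordRep X (FreeGroup.mk []) (Pi.single [] 1)) [] := by
  refine ⟨by simp [← FreeGroup.one_eq_mk], fun w hw => ?_⟩
  have : w ≠ [] := by rintro rfl; simp at hw
  simp [← FreeGroup.one_eq_mk, this]

/-- The first syllable `x ^ n` of a reduced word acts as `1 + n • prepend x`, and the rest of the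
word produces a longest word not starting with `x`. -/
theorem exists_wordRep_cons_eq [DecidableEq X] {x : X} {b : Bool} {L : List (X × Bool)}
    (h : FreeGroup.IsReduced ((x, b) :: L)) :
    ∃ (u : List X → ℤ) (c : ℤ) (w : List X), 0 < exponent b * c ∧
      wordRep X (FreeGroup.mk ((x, b) :: L)) (Pi.single [] 1) = u + c • prepend x u ∧
        w.head? ≠ some x ∧ IsLongest u w := by
  induction L generalizing x b with
  | nil =>
    exact ⟨_, exponent b, [], by simp [exponent_mul_self], wordRep_mk_cons x b [] _, by simp,
      isLongest_wordRep_nil⟩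
  | cons a L ih =>
    obtain ⟨y, b'⟩ := a
    obtain ⟨hxy, hL⟩ := FreeGroup.isReduced_cons_cons.1 h
    obtain ⟨u, c, w, hc, hu, hw, hlongest⟩ := ih hL
    by_cases e : x = y
    · subst e
      obtain rfl : b = b' := hxy rfl
      refine ⟨u, c + exponent b, w, ?_, ?_, hw, hlongest⟩
      · rw [mul_add, exponent_mul_self]
        lia
      · rw [wordRep_mk_cons, hu, map_add, map_smul, prepend_prepend, smul_zero, add_zero, add_smul,
          add_assoc]
    · refine ⟨_, exponent b, y :: w, by simp [exponent_mul_self], wordRep_mk_cons x b _ _,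
        by simpa using Ne.symm e, ?_⟩
      rw [hu]
      exact hlongest.add_smul_prepend hw (right_ne_zero_of_mul hc.ne')

theorem wordRep_injective (X : Type*) : Function.Injective (wordRep X) := by
  classical
  rw [injective_iff_map_eq_one]
  intro g hg
  rw [← FreeGroup.toWord_eq_nil_iff]
  by_contra hne
  obtain ⟨⟨x, b⟩, L, hL⟩ := List.exists_cons_of_ne_nil hne
  obtain ⟨u, c, w, hc, hu, hw, hlongest⟩ :=
    exists_wordRep_cons_eq (hL ▸ FreeGroup.isReduced_toWord (x := g))
  have h := (hlongest.add_smul_prepend hw (right_ne_zero_of_mul hc.ne')).1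
  rw [← hu, ← hL, FreeGroup.mk_toWord, hg] at h
  simp at h

theorem magnusRep_injective (X : Type*) : Function.Injective (magnusRep X) := fun g h hgh =>
  wordRep_injective X (by rw [← eval_one_magnusRep, hgh, eval_one_magnusRep])

end Magnus

theorem exists_biorder (F : Type*) [Group F] [IsFreeGroup F] :
    ∃ _ : LinearOrder F, MulLeftMono F ∧ MulRightMono F := by
  let X := IsFreeGroup.Generators F
  let entries : Module.End ℤ (List X → ℤ) →+ ((List X → ℤ) × List X → ℤ) :=
    { toFun := fun a i => a i.1 i.2
      map_zero' := rfl
      map_add' := fun _ _ => rfl }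
  have entries_injective : Function.Injective entries := fun a b h =>
    LinearMap.ext fun u => funext fun w => congrFun h (u, w)
  obtain ⟨_, _⟩ := exists_isOrderedAddMonoid_of_injective entries entries_injective
  exact exists_biorder_of_unipotent
    ((magnusRep X).comp (IsFreeGroup.toFreeGroup F).toMonoidHom)
    ((magnusRep_injective X).comp (IsFreeGroup.toFreeGroup F).injective)
    fun g => constantCoeff_magnusRep _

end BiOrders

/-! ### Malcev–Neumann series -/

section Series

open scoped Pointwise
open HahnSeries

instance {G : Type*} [Group G] [LinearOrder G] [MulLeftMono G]
    [MulRightMono G] : IsOrderedCancelSMul G G where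
  smul_le_smul_left _ _ h c := mul_le_mul_right h c
  smul_le_smul_right _ _ h c := mul_le_mul_left h c
  le_of_smul_le_smul_left _ _ _ h := le_of_mul_le_mul_left' h
  le_of_smul_le_smul_right _ _ _ h := le_of_mul_le_mul_right' h

theorem isPWO_submonoidClosure {M : Type*} [Monoid M] [Preorder M] [MulLeftMono M] [MulRightMono M]
    {s : Set M} (hpos : ∀ x ∈ s, 1 ≤ x) (hs : s.IsPWO) :
    (Submonoid.closure s : Set M).IsPWO := by
  rw [Submonoid.closure_eq_image_prod]
  exact (hs.partiallyWellOrderedOn_sublistForall₂ (· ≤ ·)).image_of_monotone_on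
    fun _ _ _ hl h => h.prod_le_prod' fun x hx => hpos x (hl x hx)

theorem mem_closure_smul_of_inv_smul_mem {G E : Type*} [Group G] [MulAction G E] {s : Set G}
    {t : Set E} {g : G} {e : E} (hg : g ∈ s) (he : g⁻¹ • e ∈ (Submonoid.closure s : Set G) • t) :
    e ∈ (Submonoid.closure s : Set G) • t := by
  obtain ⟨c, hc, x, hx, hcx⟩ := he
  refine ⟨g * c, mul_mem (Submonoid.subset_closure hg) hc, x, hx, ?_⟩
  exact (mul_smul g c x).trans (eq_inv_smul_iff.1 hcx)

/-- Malcev–Neumann series: formal sums `∑ a g • g` over a bi-ordered group `G` with well-ordered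
support. This is a copy of `HahnSeries G R`, to be multiplied by means of the multiplication
of `G`. -/
def MalcevNeumann (G R : Type*) [LinearOrder G] [Zero R] : Type _ := HahnSeries G R

noncomputable instance {G R : Type*} [LinearOrder G] [AddCommGroup R] :
    AddCommGroup (MalcevNeumann G R) :=
  inferInstanceAs (AddCommGroup (HahnSeries G R))

namespace MalcevNeumann

/-- The underlying Hahn series. -/
noncomputable def toSeries {G R : Type*} [LinearOrder G] [AddCommGroup R] :
    MalcevNeumann G R ≃+ HahnSeries G R :=
  AddEquiv.refl _

section Monomial

variable {G R : Type*} [LinearOrder G] [Ring R]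

/-- The series `r • g`. -/
noncomputable def monomial (g : G) (r : R) : MalcevNeumann G R := toSeries.symm (single g r)

theorem coeff_toSeries_monomial_of_ne {g h : G} (hgh : h ≠ g) (r : R) :
    (toSeries (monomial g r)).coeff h = 0 :=
  coeff_single_of_ne hgh

theorem coeff_toSeries_monomial_same (g : G) (r : R) :
    (toSeries (monomial g r)).coeff g = r :=
  coeff_single_same g r

noncomputable instance [One G] : One (MalcevNeumann G R) where
  one := monomial 1 1

theorem one_def [One G] : (1 : MalcevNeumann G R) = monomial 1 1 := rfl

end Monomial

section Action

variable {G E R : Type*} [Group G] [LinearOrder G] [LinearOrder E] [MulAction G E]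
  [Ring R]

theorem support_finsum_mul_subset (a : MalcevNeumann G R) (v : HahnSeries E R) :
    (Function.support fun e => ∑ᶠ g, (toSeries a).coeff g * v.coeff (g⁻¹ • e)) ⊆
      (toSeries a).support • v.support := by
  intro e he
  obtain ⟨g, hg⟩ : ∃ g, (toSeries a).coeff g * v.coeff (g⁻¹ • e) ≠ 0 := by
    by_contra! h
    exact he (finsum_eq_zero_of_forall_eq_zero h)
  exact ⟨g, left_ne_zero_of_mul hg, g⁻¹ • e, right_ne_zero_of_mul hg, smul_inv_smul g e⟩

variable [IsOrderedCancelSMul G E]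

theorem finite_setOf_mem_inv_smul_mem {s : Set G} {t : Set E} (hs : s.IsPWO) (ht : t.IsPWO)
    (e : E) : {g | g ∈ s ∧ g⁻¹ • e ∈ t}.Finite :=
  ((Set.SMulAntidiagonal.finite_of_isPWO hs ht e).image Prod.fst).subset fun g hg =>
    ⟨(g, g⁻¹ • e), ⟨hg.1, hg.2, smul_inv_smul g e⟩, rfl⟩

noncomputable instance : SMul (MalcevNeumann G R) (HahnSeries E R) where
  smul a v :=
    { coeff := fun e => ∑ᶠ g, (toSeries a).coeff g * v.coeff (g⁻¹ • e)
      isPWO_support' := ((toSeries a).isPWO_support.smul v.isPWO_support).mono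
        (support_finsum_mul_subset a v) }

theorem smul_coeff (a : MalcevNeumann G R) (v : HahnSeries E R) (e : E) :
    (a • v).coeff e = ∑ᶠ g, (toSeries a).coeff g * v.coeff (g⁻¹ • e) := rfl

theorem support_smul_subset (a : MalcevNeumann G R) (v : HahnSeries E R) :
    (a • v).support ⊆ (toSeries a).support • v.support :=
  support_finsum_mul_subset a v

theorem hasFiniteSupport_mul (a : MalcevNeumann G R) (v : HahnSeries E R) (e : E) :
    (fun g => (toSeries a).coeff g * v.coeff (g⁻¹ • e)).HasFiniteSupport :=
  (finite_setOf_mem_inv_smul_mem (toSeries a).isPWO_support v.isPWO_support e).subset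
    fun _ hg => ⟨left_ne_zero_of_mul hg, right_ne_zero_of_mul hg⟩

protected theorem smul_add (a : MalcevNeumann G R) (v w : HahnSeries E R) :
    a • (v + w) = a • v + a • w := by
  ext e
  simp only [smul_coeff, coeff_add, mul_add]
  exact finsum_add_distrib (hasFiniteSupport_mul a v e) (hasFiniteSupport_mul a w e)

protected theorem add_smul (a b : MalcevNeumann G R) (v : HahnSeries E R) :
    (a + b) • v = a • v + b • v := by
  ext e
  simp only [smul_coeff, map_add, coeff_add, add_mul]
  exact finsum_add_distrib (hasFiniteSupport_mul a v e) (hasFiniteSupport_mul b v e)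

protected theorem smul_zero (a : MalcevNeumann G R) : a • (0 : HahnSeries E R) = 0 := by
  ext e
  simp [smul_coeff]

protected theorem zero_smul (v : HahnSeries E R) : (0 : MalcevNeumann G R) • v = 0 := by
  ext e
  simp [smul_coeff]

theorem monomial_smul_coeff (g : G) (r : R) (v : HahnSeries E R) (e : E) :
    (monomial g r • v).coeff e = r * v.coeff (g⁻¹ • e) := by
  rw [smul_coeff, finsum_eq_single _ g fun h hh => by
    rw [coeff_toSeries_monomial_of_ne hh, zero_mul], coeff_toSeries_monomial_same]

theorem monomial_smul_single (g : G) (r : R) (e : E) (s : R) :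
    monomial g r • single e s = single (g • e) (r * s) := by
  ext e'
  rw [monomial_smul_coeff]
  by_cases h : e' = g • e
  · rw [h, inv_smul_smul, coeff_single_same, coeff_single_same]
  · rw [coeff_single_of_ne h, coeff_single_of_ne (mt inv_smul_eq_iff.1 h), mul_zero]

protected theorem monomial_one_smul (v : HahnSeries E R) : monomial (1 : G) (1 : R) • v = v := by
  ext e
  simp [monomial_smul_coeff]

end Action

section Ring

variable {G E R : Type*} [Group G] [LinearOrder G] [MulLeftMono G] [MulRightMono G]
  [LinearOrder E] [MulAction G E] [IsOrderedCancelSMul G E] [Ring R]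

noncomputable instance : Mul (MalcevNeumann G R) where
  mul a b := toSeries.symm (a • toSeries b)

theorem toSeries_mul (a b : MalcevNeumann G R) : toSeries (a * b) = a • toSeries b := rfl

/-- Both iterated sums are the sum of `a h * b (h⁻¹ g) * v (g⁻¹ e)` over all pairs `(g, h)`. -/
protected theorem mul_smul (a b : MalcevNeumann G R) (v : HahnSeries E R) :
    (a * b) • v = a • b • v := by
  ext e
  let f : G × G → R := fun x =>
    (toSeries a).coeff x.2 * (toSeries b).coeff (x.2⁻¹ * x.1) * v.coeff (x.1⁻¹ • e)
  have hf : f.HasFiniteSupport := by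
    refine ((finite_setOf_mem_inv_smul_mem
      ((toSeries a).isPWO_support.smul (toSeries b).isPWO_support) v.isPWO_support e).prod
      (finite_setOf_mem_inv_smul_mem (toSeries a).isPWO_support
        ((toSeries b).isPWO_support.smul v.isPWO_support) e)).subset ?_
    rintro ⟨g, h⟩ hgh
    have ha := left_ne_zero_of_mul (left_ne_zero_of_mul hgh)
    have hb := right_ne_zero_of_mul (left_ne_zero_of_mul hgh)
    have hv := right_ne_zero_of_mul hgh
    exact ⟨⟨⟨h, ha, h⁻¹ * g, hb, mul_inv_cancel_left h g⟩, hv⟩,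
      ⟨ha, h⁻¹ * g, hb, g⁻¹ • e, hv, by simp [mul_smul]⟩⟩
  calc ((a * b) • v).coeff e = ∑ᶠ (g) (h), f (g, h) := by
        rw [smul_coeff]
        refine finsum_congr fun g => ?_
        rw [toSeries_mul, smul_coeff, finsum_mul' _ _ (hasFiniteSupport_mul a (toSeries b) g)]
        rfl
    _ = ∑ᶠ x, f x := (finsum_curry f hf).symm
    _ = ∑ᶠ x : G × G, f x.swap := (finsum_comp_equiv (Equiv.prodComm G G)).symm
    _ = ∑ᶠ (h) (g), f (g, h) := finsum_curry _ (hf.comp_of_injective Prod.swap_injective)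
    _ = (a • b • v).coeff e := by
        rw [smul_coeff]
        refine finsum_congr fun h => ?_
        rw [smul_coeff, mul_finsum' _ _ (hasFiniteSupport_mul b v (h⁻¹ • e)),
          ← finsum_comp_equiv (Equiv.mulLeft h)]
        simp [f, mul_assoc, mul_smul]

noncomputable instance : Ring (MalcevNeumann G R) where
  __ := (inferInstance : AddCommGroup (MalcevNeumann G R))
  left_distrib a b c := toSeries.injective (MalcevNeumann.smul_add a (toSeries b) (toSeries c))
  right_distrib a b c := toSeries.injective (MalcevNeumann.add_smul a b (toSeries c))
  zero_mul a := toSeries.injective (MalcevNeumann.zero_smul (toSeries a))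
  mul_zero a := toSeries.injective (MalcevNeumann.smul_zero a)
  mul_assoc a b c := toSeries.injective (MalcevNeumann.mul_smul a b (toSeries c))
  one_mul a := toSeries.injective (MalcevNeumann.monomial_one_smul (toSeries a))
  mul_one a := toSeries.injective <| by
    ext g
    rw [toSeries_mul, smul_coeff, finsum_eq_single _ g fun h hh => ?_]
    · rw [smul_eq_mul, inv_mul_cancel, one_def, coeff_toSeries_monomial_same, mul_one]
    · rw [one_def, coeff_toSeries_monomial_of_ne (by simpa [inv_mul_eq_one] using hh), mul_zero]

noncomputable instance : Module (MalcevNeumann G R) (HahnSeries E R) where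
  one_smul := MalcevNeumann.monomial_one_smul
  mul_smul := MalcevNeumann.mul_smul
  smul_zero := MalcevNeumann.smul_zero
  smul_add := MalcevNeumann.smul_add
  add_smul := MalcevNeumann.add_smul
  zero_smul := MalcevNeumann.zero_smul

theorem monomial_mul_monomial (g h : G) (r s : R) :
    monomial g r * monomial h s = monomial (g * h) (r * s) :=
  toSeries.injective (monomial_smul_single g r h s)

/-- The embedding of the group into its Malcev–Neumann ring. -/
noncomputable def of : G →* MalcevNeumann G R where
  toFun g := monomial g 1
  map_one' := rfl
  map_mul' g h := by rw [monomial_mul_monomial, one_mul]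

theorem of_apply (g : G) : (of g : MalcevNeumann G R) = monomial g 1 := rfl

theorem of_smul_single (g : G) (e : E) (r : R) :
    (of g : MalcevNeumann G R) • single e r = single (g • e) r := by
  rw [of_apply, monomial_smul_single, one_mul]

end Ring

section Inverse

variable {G E : Type*} [Group G] [LinearOrder G] [MulLeftMono G] [MulRightMono G]
  [LinearOrder E] [MulAction G E] [IsOrderedCancelSMul G E]

theorem exists_add_smul_eq {R : Type*} [Ring R] {u : MalcevNeumann G R}
    (hu : ∀ g ∈ (toSeries u).support, 1 < g) (w : HahnSeries E R) : ∃ v, v + u • v = w := by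
  classical
  let M := Submonoid.closure (toSeries u).support
  let P : Set E := (M : Set G) • w.support
  have hP : P.IsPWO :=
    (isPWO_submonoidClosure (fun g hg => (hu g hg).le) (toSeries u).isPWO_support).smul
      w.isPWO_support
  have wf : WellFounded fun x y : E => x < y ∧ x ∈ P ∧ y ∈ P :=
    Set.wellFoundedOn_iff.1 hP.isWF
  let f : E → R := wf.fix fun e rec => w.coeff e - ∑ᶠ g,
    if h : g⁻¹ • e < e ∧ g⁻¹ • e ∈ P ∧ e ∈ P then (toSeries u).coeff g * rec (g⁻¹ • e) h else 0
  have hf (e) : f e = w.coeff e - ∑ᶠ g,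
      if g⁻¹ • e < e ∧ g⁻¹ • e ∈ P ∧ e ∈ P then (toSeries u).coeff g * f (g⁻¹ • e) else 0 :=
    wf.fix_eq _ e
  have f_eq_zero {e} (he : e ∉ P) : f e = 0 := by
    have hw : w.coeff e = 0 := by
      by_contra h
      exact he ⟨1, one_mem M, e, h, one_smul G e⟩
    simp [hf, he, hw]
  refine ⟨⟨f, hP.mono fun e he => by_contra fun h => he (f_eq_zero h)⟩, ?_⟩
  ext e
  rw [coeff_add, smul_coeff]
  change f e + ∑ᶠ g, (toSeries u).coeff g * f (g⁻¹ • e) = w.coeff e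
  rw [hf e, sub_add_eq_add_sub, sub_eq_iff_eq_add]
  congr 1
  refine finsum_congr fun g => ?_
  split_ifs with h
  · rfl
  · by_contra hne
    have hg : g ∈ (toSeries u).support := left_ne_zero_of_mul hne
    have hge : g⁻¹ • e ∈ P := by_contra fun h => right_ne_zero_of_mul hne (f_eq_zero h)
    refine h ⟨?_, hge, mem_closure_smul_of_inv_smul_mem hg hge⟩
    simpa using SMul.smul_lt_smul_of_lt_of_le (hu g hg) (le_refl (g⁻¹ • e))

variable {K : Type*} [DivisionRing K]

theorem isUnit_monomial (g : G) {r : K} (hr : r ≠ 0) : IsUnit (monomial g r) :=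
  ⟨⟨monomial g r, monomial g⁻¹ r⁻¹,
    by rw [monomial_mul_monomial, mul_inv_cancel, mul_inv_cancel₀ hr, one_def],
    by rw [monomial_mul_monomial, inv_mul_cancel, inv_mul_cancel₀ hr, one_def]⟩, rfl⟩

theorem exists_isUnit_mul_eq_one_add {a : MalcevNeumann G K} (ha : a ≠ 0) :
    ∃ s u : MalcevNeumann G K, IsUnit s ∧ s * a = 1 + u ∧ ∀ g ∈ (toSeries u).support, 1 < g := by
  obtain ⟨g₀, hg₀⟩ := WithTop.ne_top_iff_exists.1
    (HahnSeries.orderTop_ne_top.2 ((map_ne_zero_iff toSeries toSeries.injective).2 ha))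
  have hc : (toSeries a).coeff g₀ ≠ 0 := coeff_orderTop_ne hg₀.symm
  set s : MalcevNeumann G K := monomial g₀⁻¹ ((toSeries a).coeff g₀)⁻¹ with hs
  refine ⟨s, s * a - 1, isUnit_monomial _ (inv_ne_zero hc), by abel, fun g hg => ?_⟩
  rw [mem_support, map_sub, coeff_sub, toSeries_mul, hs, monomial_smul_coeff, inv_inv,
    smul_eq_mul, one_def] at hg
  by_contra! hle
  rcases hle.eq_or_lt with rfl | hlt
  · rw [mul_one, inv_mul_cancel₀ hc, coeff_toSeries_monomial_same, sub_self] at hg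
    exact hg rfl
  · have h : (toSeries a).coeff (g₀ * g) = 0 :=
      coeff_eq_zero_of_lt_orderTop (hg₀ ▸ WithTop.coe_lt_coe.2 (mul_lt_of_lt_one_right' g₀ hlt))
    rw [h, mul_zero, coeff_toSeries_monomial_of_ne hlt.ne, sub_self] at hg
    exact hg rfl

theorem exists_smul_eq {a : MalcevNeumann G K} (ha : a ≠ 0) (w : HahnSeries E K) :
    ∃ v, a • v = w := by
  obtain ⟨s, u, hs, hsa, hu⟩ := exists_isUnit_mul_eq_one_add ha
  obtain ⟨v, hv⟩ := exists_add_smul_eq hu (s • w)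
  refine ⟨v, hs.smul_left_cancel.1 ?_⟩
  rw [← mul_smul, hsa, add_smul, one_smul, hv]

noncomputable instance : DivisionRing (MalcevNeumann G K) :=
  have : Nontrivial (MalcevNeumann G K) := inferInstanceAs (Nontrivial (HahnSeries G K))
  have exists_mul_eq_one {a : MalcevNeumann G K} (ha : a ≠ 0) : ∃ b, a * b = 1 :=
    (exists_smul_eq ha (toSeries 1)).imp fun _ hb => toSeries.injective hb
  .ofIsUnitOrEqZero fun a => or_iff_not_imp_right.2 fun ha => by
    obtain ⟨b, hb⟩ := exists_mul_eq_one ha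
    obtain ⟨c, hc⟩ := exists_mul_eq_one (right_ne_zero_of_mul (hb ▸ one_ne_zero))
    exact ⟨⟨a, b, hb, left_inv_eq_right_inv hb hc ▸ hc⟩, rfl⟩

end Inverse

end MalcevNeumann

end Series

/-! ### Leading exponents and dimension -/

section Dimension

open HahnSeries MalcevNeumann

theorem sum_ne_zero_of_injOn_orderTop {ι Γ R : Type*} [LinearOrder Γ] [AddCommMonoid R]
    {s : Finset ι} (hs : s.Nonempty) {x : ι → HahnSeries Γ R} (hx : ∀ i ∈ s, x i ≠ 0)
    (hinj : Set.InjOn (fun i => (x i).orderTop) s) : ∑ i ∈ s, x i ≠ 0 := by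
  obtain ⟨i, hi, hmin⟩ := s.exists_min_image (fun i => (x i).orderTop) hs
  obtain ⟨e, he⟩ := WithTop.ne_top_iff_exists.1 (orderTop_ne_top.2 (hx i hi))
  intro h
  refine coeff_orderTop_ne he.symm ?_
  rw [← Finset.sum_eq_single_of_mem (f := fun j => (x j).coeff e) i hi fun j hj hji => ?_,
    ← coeff_sum, h, coeff_zero]
  refine coeff_eq_zero_of_lt_orderTop (he ▸ (hmin j hj).lt_of_ne fun hij => hji ?_)
  exact (hinj hi hj hij).symm

section LeadingOrbits

theorem exists_smul_out_eq {G E : Type*} [Group G] [MulAction G E] (e : E) :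
    ∃ g : G, g • (⟦e⟧ : MulAction.orbitRel.Quotient G E).out = e :=
  MulAction.orbitRel_apply.1 ((MulAction.orbitRel G E).symm (Quotient.mk_out e))

variable {G E K : Type*} [Group G] [LinearOrder G] [LinearOrder E] [MulAction G E]
  [IsOrderedCancelSMul G E] [DivisionRing K]

theorem orderTop_smul {a : MalcevNeumann G K} {v : HahnSeries E K} {g : G} {e : E}
    (ha : (toSeries a).orderTop = g) (hv : v.orderTop = e) : (a • v).orderTop = (g • e : E) := by
  have hcoeff : (a • v).coeff (g • e) = (toSeries a).coeff g * v.coeff e := by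
    rw [smul_coeff, finsum_eq_single _ g, inv_smul_smul]
    intro h hh
    by_contra hne
    have hgh : g ≤ h :=
      WithTop.coe_le_coe.1 (ha ▸ orderTop_le_of_coeff_ne_zero (left_ne_zero_of_mul hne))
    have he : e ≤ h⁻¹ • g • e :=
      WithTop.coe_le_coe.1 (hv ▸ orderTop_le_of_coeff_ne_zero (right_ne_zero_of_mul hne))
    simpa using SMul.smul_lt_smul_of_lt_of_le (hgh.lt_of_ne' hh) he
  refine orderTop_eq_of_le ?_ fun x hx => ?_
  · rw [mem_support, hcoeff]
    exact mul_ne_zero (coeff_orderTop_ne ha) (coeff_orderTop_ne hv)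
  · obtain ⟨h, hh, y, hy, rfl⟩ := support_smul_subset a v hx
    exact IsOrderedSMul.smul_le_smul
      (WithTop.coe_le_coe.1 (ha ▸ orderTop_le_of_coeff_ne_zero hh))
      (WithTop.coe_le_coe.1 (hv ▸ orderTop_le_of_coeff_ne_zero hy))

variable [MulLeftMono G] [MulRightMono G]

theorem linearIndependent_of_orderTop {ι : Type*} {v : ι → HahnSeries E K} {e : ι → E}
    (hv : ∀ i, (v i).orderTop = e i)
    (he : Function.Injective fun i => (⟦e i⟧ : MulAction.orbitRel.Quotient G E)) :
    LinearIndependent (MalcevNeumann G K) v := by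
  classical
  rw [linearIndependent_iff']
  intro s d hsum
  by_contra! hne
  obtain ⟨j, hj, hdj⟩ := hne
  have hlead (i) (hi : d i ≠ 0) : ∃ g : G, (d i • v i).orderTop = (g • e i : E) := by
    obtain ⟨g, hg⟩ := WithTop.ne_top_iff_exists.1
      (orderTop_ne_top.2 ((map_ne_zero_iff toSeries toSeries.injective).2 hi))
    exact ⟨g, orderTop_smul hg.symm (hv i)⟩
  refine sum_ne_zero_of_injOn_orderTop (s := s.filter (d · ≠ 0)) (x := fun i => d i • v i)
    ⟨j, by simp [hj, hdj]⟩ (fun i hi => ?_) (fun i hi k hk hik => ?_) ?_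
  · obtain ⟨g, hg⟩ := hlead i (Finset.mem_filter.1 hi).2
    exact orderTop_ne_top.1 (hg ▸ WithTop.coe_ne_top)
  · obtain ⟨g, hg⟩ := hlead i (Finset.mem_filter.1 hi).2
    obtain ⟨h, hh⟩ := hlead k (Finset.mem_filter.1 hk).2
    have hgh : g • e i = h • e k := WithTop.coe_injective (by rw [← hg, ← hh]; exact hik)
    refine he (Quotient.sound (MulAction.orbitRel_apply.2 ⟨g⁻¹ * h, ?_⟩))
    simp only [mul_smul, ← hgh, inv_smul_smul]
  · rw [Finset.sum_filter_of_ne fun i _ => ?_, hsum]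
    exact mt fun hd => by rw [hd, zero_smul]

/-- The `G`-orbits of the leading exponents of the nonzero elements of `V`. -/
def leadingOrbits (V : Submodule (MalcevNeumann G K) (HahnSeries E K)) :
    Set (MulAction.orbitRel.Quotient G E) :=
  {q | ∃ v ∈ V, ∃ e : E, v.orderTop = e ∧ ⟦e⟧ = q}

theorem exists_linearIndependent_leadingOrbits
    (V : Submodule (MalcevNeumann G K) (HahnSeries E K)) :
    ∃ b : leadingOrbits V → V, LinearIndependent (MalcevNeumann G K) b := by
  choose v hv e he hq using fun q : leadingOrbits V => q.2
  refine ⟨fun q => ⟨v q, hv q⟩, .of_comp V.subtype (linearIndependent_of_orderTop he ?_)⟩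
  intro q q' h
  exact Subtype.ext ((hq q).symm.trans (h.trans (hq q')))

/-- The coordinate of a series along the orbit of `e`, identified with `G` by `g ↦ g • e`. -/
noncomputable def coord (e : E) : HahnSeries E K →ₗ[MalcevNeumann G K] MalcevNeumann G K where
  toFun v := toSeries.symm
    { coeff := fun g => v.coeff (g • e)
      isPWO_support' := by
        rw [Set.IsPWO, Set.partiallyWellOrderedOn_iff_exists_lt]
        intro f hf
        obtain ⟨m, n, hmn, hle⟩ := v.isPWO_support.exists_lt (f := fun n => f n • e) hf
        exact ⟨m, n, hmn, IsOrderedCancelSMul.le_of_smul_le_smul_right _ _ e hle⟩ }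
  map_add' v w := toSeries.injective (by ext; rfl)
  map_smul' a v := toSeries.injective <| by
    ext g
    exact finsum_congr fun h => by rw [smul_smul]; rfl

theorem injective_pi_coord (V : Submodule (MalcevNeumann G K) (HahnSeries E K)) :
    Function.Injective
      (LinearMap.pi fun q : leadingOrbits V =>
        (coord (G := G) (K := K) q.1.out).comp V.subtype) := by
  refine (injective_iff_map_eq_zero _).2 ?_
  rintro ⟨v, hv⟩ hcoord
  by_contra hne
  obtain ⟨e, he⟩ := WithTop.ne_top_iff_exists.1
    (orderTop_ne_top.2 fun h => hne (Subtype.ext h))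
  obtain ⟨g, hg⟩ := exists_smul_out_eq (G := G) e
  have h := congrArg (fun a => (toSeries a).coeff g) (congrFun hcoord ⟨⟦e⟧, v, hv, e, he.symm, rfl⟩)
  refine coeff_orderTop_ne he.symm ?_
  rw [← hg]
  exact h

theorem moduleFinite_iff_finite_leadingOrbits
    {V : Submodule (MalcevNeumann G K) (HahnSeries E K)} :
    Module.Finite (MalcevNeumann G K) V ↔ (leadingOrbits V).Finite := by
  refine ⟨fun _ => ?_, fun h => ?_⟩
  · obtain ⟨b, hb⟩ := exists_linearIndependent_leadingOrbits V
    exact hb.finite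
  · have := h.fintype
    exact Module.Finite.of_injective _ (injective_pi_coord V)

theorem ncard_leadingOrbits (V : Submodule (MalcevNeumann G K) (HahnSeries E K))
    [Module.Finite (MalcevNeumann G K) V] :
    (leadingOrbits V).ncard = Module.finrank (MalcevNeumann G K) V := by
  have := (moduleFinite_iff_finite_leadingOrbits (V := V).1 inferInstance).fintype
  rw [← Nat.card_coe_set_eq, Nat.card_eq_fintype_card]
  refine le_antisymm ?_ ?_
  · obtain ⟨b, hb⟩ := exists_linearIndependent_leadingOrbits V
    exact hb.fintype_card_le_finrank
  · simpa using LinearMap.finrank_le_finrank_of_injective (injective_pi_coord V)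

theorem exists_linearMap_single {N : Type*} [AddCommGroup N] [Module (MalcevNeumann G K) N]
    {ψ : E → N} (hψ : ∀ (g : G) e, ψ (g • e) = (of g : MalcevNeumann G K) • ψ e) :
    ∃ Ψ : HahnSeries E K →ₗ[MalcevNeumann G K] N, ∀ e, Ψ (single e 1) = ψ e := by
  let b (q : MulAction.orbitRel.Quotient G E) : HahnSeries E K := single q.out 1
  have hb : LinearIndependent (MalcevNeumann G K) b := by
    refine linearIndependent_of_orderTop (fun q => orderTop_single one_ne_zero) fun q q' h => ?_
    simpa using h
  obtain ⟨Ψ, hΨ⟩ := LinearMap.exists_extend ((Module.Basis.span hb).constr ℕ fun q => ψ q.out)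
  have hΨb (q) : Ψ (b q) = ψ q.out := by
    rw [← (Module.Basis.span hb).constr_basis ℕ (fun q => ψ q.out), ← hΨ, LinearMap.comp_apply,
      Submodule.subtype_apply, Module.Basis.span_apply]
  refine ⟨Ψ, fun e => ?_⟩
  obtain ⟨g, hg⟩ := exists_smul_out_eq (G := G) e
  rw [← hg, ← of_smul_single g, map_smul, hψ]
  exact congrArg _ (hΨb _)

end LeadingOrbits

section Subgroup

variable {F E : Type*} [Group F]

instance (J : Subgroup F) [Preorder F] [MulLeftMono F] : MulLeftMono J :=
  ⟨fun c _ _ h => mul_le_mul_right (α := F) h c⟩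

instance (J : Subgroup F) [Preorder F] [MulRightMono F] : MulRightMono J :=
  ⟨fun c _ _ h => mul_le_mul_left (α := F) h c⟩

instance (J : Subgroup F) [LE F] [LE E] [MulAction F E] [IsOrderedCancelSMul F E] :
    IsOrderedCancelSMul J E where
  smul_le_smul_left a b h c := IsOrderedSMul.smul_le_smul_left a b h (c : F)
  smul_le_smul_right c d h a := IsOrderedSMul.smul_le_smul_right (c : F) d h a
  le_of_smul_le_smul_left c a b h := IsOrderedCancelSMul.le_of_smul_le_smul_left (c : F) a b h
  le_of_smul_le_smul_right c d a h := IsOrderedCancelSMul.le_of_smul_le_smul_right (c : F) d a h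

/-- The projection from the orbits of a subgroup to the orbits of a larger one. -/
def orbitMap [MulAction F E] {J H : Subgroup F} (h : J ≤ H) :
    MulAction.orbitRel.Quotient J E → MulAction.orbitRel.Quotient H E :=
  Quotient.map id fun _ _ ⟨g, hg⟩ => ⟨Subgroup.inclusion h g, hg⟩

theorem injective_orbitMap_inf [MulAction F E] [IsCancelSMul F E] (K₁ K₂ : Subgroup F) :
    Function.Injective fun q : MulAction.orbitRel.Quotient ↥(K₁ ⊓ K₂) E =>
      (orbitMap (inf_le_left : K₁ ⊓ K₂ ≤ K₁) q, orbitMap (inf_le_right : K₁ ⊓ K₂ ≤ K₂) q) := by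
  intro q q' h
  induction q, q' using Quotient.inductionOn₂ with | _ x y
  obtain ⟨⟨g, hg⟩, hgxy⟩ := Quotient.exact (congrArg Prod.fst h)
  obtain ⟨⟨g', hg'⟩, hgxy'⟩ := Quotient.exact (congrArg Prod.snd h)
  obtain rfl : g = g' := IsCancelSMul.right_cancel g g' y (hgxy.trans hgxy'.symm)
  exact Quotient.sound ⟨⟨g, hg, hg'⟩, hgxy⟩

variable {K : Type*} [DivisionRing K] [LinearOrder F] [MulLeftMono F] [MulRightMono F]
  [LinearOrder E] [MulAction F E] [IsOrderedCancelSMul F E]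

theorem mapsTo_orbitMap_leadingOrbits {J H : Subgroup F} (h : J ≤ H)
    {V : Submodule (MalcevNeumann J K) (HahnSeries E K)}
    {W : Submodule (MalcevNeumann H K) (HahnSeries E K)} (hVW : ∀ v ∈ V, v ∈ W) :
    Set.MapsTo (orbitMap h) (leadingOrbits V) (leadingOrbits W) := by
  rintro _ ⟨v, hv, e, he, rfl⟩
  exact ⟨v, hVW v hv, e, he, rfl⟩

theorem moduleFinite_and_finrank_le_mul {K₁ K₂ : Subgroup F}
    {V : Submodule (MalcevNeumann ↥(K₁ ⊓ K₂) K) (HahnSeries E K)}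
    {V₁ : Submodule (MalcevNeumann K₁ K) (HahnSeries E K)}
    {V₂ : Submodule (MalcevNeumann K₂ K) (HahnSeries E K)}
    [Module.Finite (MalcevNeumann K₁ K) V₁] [Module.Finite (MalcevNeumann K₂ K) V₂]
    (h₁ : ∀ v ∈ V, v ∈ V₁) (h₂ : ∀ v ∈ V, v ∈ V₂) :
    Module.Finite (MalcevNeumann ↥(K₁ ⊓ K₂) K) V ∧
      Module.finrank (MalcevNeumann ↥(K₁ ⊓ K₂) K) V ≤
        Module.finrank (MalcevNeumann K₁ K) V₁ * Module.finrank (MalcevNeumann K₂ K) V₂ := by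
  have hfin : (leadingOrbits V₁ ×ˢ leadingOrbits V₂).Finite :=
    (moduleFinite_iff_finite_leadingOrbits.1 inferInstance).prod
      (moduleFinite_iff_finite_leadingOrbits.1 inferInstance)
  have hmaps : Set.MapsTo
      (fun q => (orbitMap (inf_le_left : K₁ ⊓ K₂ ≤ K₁) q, orbitMap (inf_le_right : K₁ ⊓ K₂ ≤ K₂) q))
      (leadingOrbits V) (leadingOrbits V₁ ×ˢ leadingOrbits V₂) := fun q hq =>
    ⟨mapsTo_orbitMap_leadingOrbits inf_le_left h₁ hq,
      mapsTo_orbitMap_leadingOrbits inf_le_right h₂ hq⟩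
  have hinj := (injective_orbitMap_inf (E := E) K₁ K₂).injOn (s := leadingOrbits V)
  have : Module.Finite (MalcevNeumann ↥(K₁ ⊓ K₂) K) V :=
    moduleFinite_iff_finite_leadingOrbits.2 (Set.Finite.of_injOn hmaps hinj hfin)
  refine ⟨this, ?_⟩
  rw [← ncard_leadingOrbits, ← ncard_leadingOrbits, ← ncard_leadingOrbits, ← Set.ncard_prod]
  exact Set.ncard_le_ncard_of_injOn _ hmaps hinj hfin

end Subgroup

end Dimension

/-! ### Crossed homomorphisms -/

section CrossedHomomorphisms

theorem closure_range_freeGroupBasis {ι G : Type*} [Group G] (b : FreeGroupBasis ι G) :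
    Subgroup.closure (Set.range b) = ⊤ := by
  let L : G →* Subgroup.closure (Set.range b) :=
    b.lift fun i => ⟨b i, Subgroup.subset_closure ⟨i, rfl⟩⟩
  have hL : (Subgroup.closure (Set.range b)).subtype.comp L = MonoidHom.id G :=
    b.ext_hom _ _ fun i => by simp [L]
  refine (Subgroup.eq_top_iff' _).2 fun g => ?_
  have hg : (L g : G) = g := DFunLike.congr_fun hL g
  exact hg ▸ (L g).2

/-- A crossed homomorphism (1-cocycle) from `G` to `N`, on which `G` acts through `ρ`. -/
def IsCrossedHom {G R N : Type*} [Group G] [Ring R] [AddCommGroup N] [Module R N] (ρ : G →* R)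
    (c : G → N) : Prop :=
  ∀ g h, c (g * h) = c g + ρ g • c h

variable {ι G R N : Type*} [Group G] [Ring R] [AddCommGroup N] [Module R N] {ρ : G →* R}
  {c : G → N}

namespace IsCrossedHom

protected theorem map_one (hc : IsCrossedHom ρ c) : c 1 = 0 := by
  simpa using hc 1 1

protected theorem map_inv (hc : IsCrossedHom ρ c) (g : G) : c g⁻¹ = -(ρ g⁻¹ • c g) := by
  rw [eq_neg_iff_add_eq_zero, ← hc, inv_mul_cancel, hc.map_one]

theorem span_range (hc : IsCrossedHom ρ c) {x : ι → G}
    (hx : Subgroup.closure (Set.range x) = ⊤) :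
    Submodule.span R (Set.range c) = Submodule.span R (Set.range (c ∘ x)) := by
  refine le_antisymm (Submodule.span_le.2 ?_)
    (Submodule.span_mono (Set.range_comp_subset_range x c))
  rintro _ ⟨g, rfl⟩
  have hg : g ∈ Subgroup.closure (Set.range x) := hx ▸ Subgroup.mem_top g
  induction hg using Subgroup.closure_induction with
  | mem _ h =>
    obtain ⟨i, rfl⟩ := h
    exact Submodule.subset_span ⟨i, rfl⟩
  | one => exact hc.map_one ▸ zero_mem _
  | mul g h _ _ hg hh => exact hc g h ▸ add_mem hg (Submodule.smul_mem _ _ hh)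
  | inv g _ hg => exact hc.map_inv g ▸ neg_mem (Submodule.smul_mem _ _ hg)

end IsCrossedHom

/-- Crossed homomorphisms are the left components of the sections of `N ⋊ G → G`. -/
theorem exists_isCrossedHom (b : FreeGroupBasis ι G) (ρ : G →* R) (x : ι → N) :
    ∃ c : G → N, IsCrossedHom ρ c ∧ ∀ i, c (b i) = x i := by
  let _ : DistribMulAction G N := DistribMulAction.compHom N ρ
  let φ : G →* MulAut (Multiplicative N) :=
    (MulAutMultiplicative N).symm.toMonoidHom.comp (DistribMulAction.toAddAut G N)
  let s : G →* Multiplicative N ⋊[φ] G := b.lift fun i => ⟨.ofAdd (x i), b i⟩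
  have hs : SemidirectProduct.rightHom.comp s = MonoidHom.id G :=
    b.ext_hom _ _ fun i => by simp [s]
  refine ⟨fun g => (s g).left.toAdd, fun g h => ?_, fun i => ?_⟩
  · have hg : (s g).right = g := DFunLike.congr_fun hs g
    simp only [map_mul, SemidirectProduct.mul_left, hg]
    rfl
  · simp [s]

end CrossedHomomorphisms

/-! ### Cycles -/

section Cycles

open HahnSeries MalcevNeumann

section Prod

variable {R M N : Type*} [DivisionRing R] [AddCommGroup M] [Module R M] [AddCommGroup N]
  [Module R N]

theorem map_inl_comap_inl (W : Submodule R (M × N)) :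
    (W.comap (LinearMap.inl R M N)).map (LinearMap.inl R M N) =
      W ⊓ LinearMap.ker (LinearMap.snd R M N) := by
  rw [Submodule.map_comap_eq, LinearMap.range_inl, inf_comm]

theorem finite_comap_inl (W : Submodule R (M × N)) [Module.Finite R W] :
    Module.Finite R (W.comap (LinearMap.inl R M N)) := by
  have hle : (W.comap (LinearMap.inl R M N)).map (LinearMap.inl R M N) ≤ W :=
    Submodule.map_comap_le _ _
  exact Module.Finite.of_injective (Submodule.inclusion hle ∘ₗ
    (Submodule.equivMapOfInjective _ LinearMap.inl_injective _).toLinearMap)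
    ((Submodule.inclusion_injective hle).comp (LinearEquiv.injective _))

theorem finite_of_finite_comap_inl {W : Submodule R (M × N)}
    (hM : Module.Finite R (W.comap (LinearMap.inl R M N)))
    (hN : Module.Finite R (W.map (LinearMap.snd R M N))) : Module.Finite R W := by
  refine Module.Finite.iff_fg.2 (Submodule.fg_of_fg_map_of_fg_inf_ker (LinearMap.snd R M N)
    (Module.Finite.iff_fg.1 hN) ?_)
  rw [← map_inl_comap_inl]
  exact (Module.Finite.iff_fg.1 hM).map _

theorem finrank_map_snd_add_finrank_comap_inl (W : Submodule R (M × N)) [Module.Finite R W] :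
    Module.finrank R (W.map (LinearMap.snd R M N)) +
      Module.finrank R (W.comap (LinearMap.inl R M N)) = Module.finrank R W := by
  have hker : ((LinearMap.snd R M N).domRestrict W).ker.map W.subtype =
      (W.comap (LinearMap.inl R M N)).map (LinearMap.inl R M N) := by
    rw [LinearMap.ker_domRestrict, Submodule.map_comap_eq, Submodule.range_subtype,
      map_inl_comap_inl]
  rw [← LinearMap.finrank_range_add_finrank_ker ((LinearMap.snd R M N).domRestrict W),
    LinearMap.range_domRestrict, ← Submodule.finrank_map_subtype_eq, hker,
    (Submodule.equivMapOfInjective (LinearMap.inl R M N) LinearMap.inl_injective _).finrank_eq]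

end Prod

variable {F E K : Type*} [Group F] [LinearOrder F] [LinearOrder E] [MulAction F E]
  [IsOrderedCancelSMul F E] [DivisionRing K]

/-- The extension of a series on a subgroup by zero to a larger subgroup. -/
noncomputable def ofLE {J H : Subgroup F} (h : J ≤ H) (a : MalcevNeumann J K) :
    MalcevNeumann H K :=
  toSeries.symm (embDomain (OrderEmbedding.ofStrictMono (Subgroup.inclusion h) fun _ _ => id)
    (toSeries a))

theorem ofLE_smul {J H : Subgroup F} (h : J ≤ H) (a : MalcevNeumann J K) (v : HahnSeries E K) :
    ofLE h a • v = a • v := by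
  ext e
  have hrange : ∀ k ∉ Set.range (Subgroup.inclusion h), (toSeries (ofLE h a)).coeff k = 0 :=
    fun k hk => embDomain_of_notMem_range hk
  rw [smul_coeff, ← finsum_mem_univ, finsum_mem_inter_support_eq' _ Set.univ
    (Set.range (Subgroup.inclusion h)) fun k hk => iff_of_true trivial ?_,
    finsum_mem_range (Subgroup.inclusion_injective h)]
  · exact finsum_congr fun j => congrArg (· * v.coeff (j⁻¹ • e)) embDomain_coeff
  · by_contra hk'
    exact left_ne_zero_of_mul hk (hrange k hk')

theorem of_coe_smul {H : Subgroup F} [MulLeftMono F] [MulRightMono F] (h : H) (v : HahnSeries E K) :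
    (of (h : F) : MalcevNeumann F K) • v = (of h : MalcevNeumann H K) • v := by
  ext e
  rw [of_apply, of_apply, monomial_smul_coeff, monomial_smul_coeff]
  rfl

variable [MulLeftMono F] [MulRightMono F]

/-- The graph of the boundary map on the `1`-chains spanned by the Fox derivatives `d h`, `h ∈ H`:
it sends `d h` to `h - 1`. -/
noncomputable def boundaryGraph (d : F → HahnSeries E K) (H : Subgroup F) :
    Submodule (MalcevNeumann H K) (HahnSeries E K × HahnSeries F K) :=
  Submodule.span (MalcevNeumann H K)
    (Set.range fun h : H => (d h, single (h : F) 1 - single 1 1))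

/-- The chains of `boundaryGraph d H` with zero boundary. -/
noncomputable def cycles (d : F → HahnSeries E K) (H : Subgroup F) :
    Submodule (MalcevNeumann H K) (HahnSeries E K) :=
  (boundaryGraph d H).comap (LinearMap.inl _ _ _)

theorem mem_boundaryGraph_of_le {d : F → HahnSeries E K} {J H : Subgroup F} (hJH : J ≤ H)
    {w : HahnSeries E K × HahnSeries F K} (hw : w ∈ boundaryGraph d J) :
    w ∈ boundaryGraph d H := by
  induction hw using Submodule.span_induction with
  | mem _ h =>
    obtain ⟨j, rfl⟩ := h
    exact Submodule.subset_span ⟨Subgroup.inclusion hJH j, rfl⟩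
  | zero => exact zero_mem _
  | add _ _ _ _ hv hw => exact add_mem hv hw
  | smul a w _ hw =>
    have ha : ofLE hJH a • w = a • w := Prod.ext (ofLE_smul hJH a w.1) (ofLE_smul hJH a w.2)
    exact ha ▸ Submodule.smul_mem _ _ hw

theorem mem_cycles_of_le {d : F → HahnSeries E K} {J H : Subgroup F} (hJH : J ≤ H)
    {v : HahnSeries E K} (hv : v ∈ cycles d J) : v ∈ cycles d H :=
  mem_boundaryGraph_of_le hJH hv

theorem boundaryGraph_eq_span {d : F → HahnSeries E K}
    (hd : IsCrossedHom (of : F →* MalcevNeumann F K) d) {ι : Type*} {H : Subgroup F} {x : ι → H}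
    (hx : Subgroup.closure (Set.range x) = ⊤) :
    boundaryGraph d H = Submodule.span (MalcevNeumann H K)
      (Set.range fun i => (d (x i), single (x i : F) 1 - single 1 1)) := by
  refine IsCrossedHom.span_range (ρ := of) (fun g h => Prod.ext ?_ ?_) hx
  · rw [Subgroup.coe_mul, hd, of_coe_smul]
    rfl
  · simp only [Prod.snd_add, Prod.smul_snd, smul_sub, of_smul_single, Subgroup.smul_def,
      smul_eq_mul, mul_one, Subgroup.coe_mul, sub_add_sub_cancel']

theorem map_snd_boundaryGraph_le (d : F → HahnSeries E K) (H : Subgroup F) :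
    (boundaryGraph d H).map (LinearMap.snd _ _ _) ≤
      Submodule.span (MalcevNeumann H K) {(single 1 1 : HahnSeries F K)} := by
  rw [boundaryGraph, Submodule.map_span, Submodule.span_le]
  rintro _ ⟨_, ⟨h, rfl⟩, rfl⟩
  refine Submodule.sub_mem _ (Submodule.mem_span_singleton.2 ⟨of h, ?_⟩)
    (Submodule.mem_span_singleton_self _)
  rw [of_smul_single, Subgroup.smul_def, smul_eq_mul, mul_one]

theorem moduleFinite_boundaryGraph_and_finrank_le (d : F → HahnSeries E K) (H : Subgroup F)
    [Module.Finite (MalcevNeumann H K) (cycles d H)] :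
    Module.Finite (MalcevNeumann H K) (boundaryGraph d H) ∧
      Module.finrank (MalcevNeumann H K) (boundaryGraph d H) ≤
        Module.finrank (MalcevNeumann H K) (cycles d H) + 1 := by
  have hle := map_snd_boundaryGraph_le d H
  have hfin : Module.Finite (MalcevNeumann H K) (boundaryGraph d H) :=
    finite_of_finite_comap_inl ‹Module.Finite _ (cycles d H)›
      (Submodule.finiteDimensional_of_le hle)
  refine ⟨hfin, ?_⟩
  rw [← finrank_map_snd_add_finrank_comap_inl, add_comm]
  refine Nat.add_le_add_left ((Submodule.finrank_mono hle).trans ?_) _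
  exact (finrank_span_le_card _).trans (by simp)

theorem finrank_cycles_lt_finrank_boundaryGraph (d : F → HahnSeries E K) {H : Subgroup F}
    (hH : H ≠ ⊥) [Module.Finite (MalcevNeumann H K) (boundaryGraph d H)] :
    Module.finrank (MalcevNeumann H K) (cycles d H) <
      Module.finrank (MalcevNeumann H K) (boundaryGraph d H) := by
  obtain ⟨h, hh⟩ := Subgroup.ne_bot_iff_exists_ne_one.1 hH
  have hne : (single (h : F) 1 - single 1 1 : HahnSeries F K) ≠ 0 :=
    sub_ne_zero.2 fun heq => hh (Subtype.ext (by simpa using congrArg orderTop heq))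
  rw [← finrank_map_snd_add_finrank_comap_inl]
  refine Nat.lt_add_of_pos_left ((Submodule.one_le_finrank_iff).2 ?_)
  exact Submodule.ne_bot_iff _ |>.2 ⟨_, ⟨_, Submodule.subset_span ⟨h, rfl⟩, rfl⟩, hne⟩

theorem moduleFinite_cycles_and_finrank_lt_card {d : F → HahnSeries E K}
    (hd : IsCrossedHom (of : F →* MalcevNeumann F K) d) {S : Finset F}
    (hS : Subgroup.closure (S : Set F) ≠ ⊥) :
    Module.Finite (MalcevNeumann (Subgroup.closure (S : Set F)) K) (cycles d (.closure S)) ∧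
      Module.finrank (MalcevNeumann (Subgroup.closure (S : Set F)) K) (cycles d (.closure S)) <
        S.card := by
  let x (s : S) : Subgroup.closure (S : Set F) := ⟨s, Subgroup.subset_closure s.2⟩
  have hx : Subgroup.closure (Set.range x) = ⊤ := by
    rw [← Subgroup.closure_closure_coe_preimage]
    congr 1
    ext y
    simp [x, Subtype.ext_iff]
  have hspan := boundaryGraph_eq_span hd hx
  have hfin : Module.Finite (MalcevNeumann (Subgroup.closure (S : Set F)) K)
      (boundaryGraph d (.closure S)) :=
    hspan ▸ Module.Finite.span_of_finite _ (Set.finite_range _)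
  refine ⟨finite_comap_inl _, (finrank_cycles_lt_finrank_boundaryGraph d hS).trans_le ?_⟩
  rw [hspan]
  exact (finrank_range_le_card _).trans (by simp)

theorem finite_and_card_le_finrank_cycles_add_one {d : F → HahnSeries E K} {J : Subgroup F}
    {ι : Type*} {x : ι → J} (hx : LinearIndependent (MalcevNeumann J K) fun i => d (x i))
    [Module.Finite (MalcevNeumann J K) (cycles d J)] :
    Finite ι ∧ Nat.card ι ≤ Module.finrank (MalcevNeumann J K) (cycles d J) + 1 := by
  obtain ⟨hfin, hle⟩ := moduleFinite_boundaryGraph_and_finrank_le d J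
  let y (i : ι) : boundaryGraph d J := ⟨_, Submodule.subset_span ⟨x i, rfl⟩⟩
  have hy : LinearIndependent (MalcevNeumann J K) y :=
    .of_comp (LinearMap.fst _ _ _ ∘ₗ (boundaryGraph d J).subtype) hx
  have := hy.finite
  have := Fintype.ofFinite ι
  exact ⟨inferInstance, Nat.card_eq_fintype_card (α := ι) ▸ hy.fintype_card_le_finrank.trans hle⟩

theorem moduleFinite_cycles_inf_and_finrank_le (d : F → HahnSeries E K) (K₁ K₂ : Subgroup F)
    [Module.Finite (MalcevNeumann K₁ K) (cycles d K₁)]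
    [Module.Finite (MalcevNeumann K₂ K) (cycles d K₂)] :
    Module.Finite (MalcevNeumann ↥(K₁ ⊓ K₂) K) (cycles d (K₁ ⊓ K₂)) ∧
      Module.finrank (MalcevNeumann ↥(K₁ ⊓ K₂) K) (cycles d (K₁ ⊓ K₂)) ≤
        Module.finrank (MalcevNeumann K₁ K) (cycles d K₁) *
          Module.finrank (MalcevNeumann K₂ K) (cycles d K₂) :=
  moduleFinite_and_finrank_le_mul (fun _ => mem_cycles_of_le inf_le_left)
    fun _ => mem_cycles_of_le inf_le_right

end Cycles

/-! ### Edges of the Cayley graph -/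

section CayleyGraph

open HahnSeries MalcevNeumann

/-- The edges of the Cayley graph of `F` over generators labelled by `X`: the edge with label `x`
and origin `f` is encoded as `(x, f)`. The lexicographic order is invariant under the action of
`F` on origins. -/
def Edge (F X : Type*) : Type _ := X ×ₗ F

namespace Edge

variable {F X : Type*}

/-- The edge with origin `f` and label `x`. -/
def mk (f : F) (x : X) : Edge F X := toLex (x, f)

/-- The origin of an edge. -/
def origin (e : Edge F X) : F := (ofLex e).2

/-- The label of an edge. -/
def label (e : Edge F X) : X := (ofLex e).1

instance [LinearOrder F] [LinearOrder X] : LinearOrder (Edge F X) :=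
  inferInstanceAs (LinearOrder (X ×ₗ F))

theorem le_iff [LinearOrder F] [LinearOrder X] {e e' : Edge F X} :
    e ≤ e' ↔ e.label < e'.label ∨ e.label = e'.label ∧ e.origin ≤ e'.origin :=
  Prod.Lex.le_iff

variable [Group F]

instance : MulAction F (Edge F X) where
  smul g e := mk (g * e.origin) e.label
  one_smul e := congrArg (mk · e.label) (one_mul e.origin)
  mul_smul g h e := congrArg (mk · e.label) (mul_assoc g h e.origin)

theorem origin_smul (g : F) (e : Edge F X) : (g • e).origin = g * e.origin := rfl

theorem label_smul (g : F) (e : Edge F X) : (g • e).label = e.label := rfl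

variable [LinearOrder F] [LinearOrder X] [MulLeftMono F] [MulRightMono F]

instance : IsOrderedCancelSMul F (Edge F X) where
  smul_le_smul_left e e' h g := by
    simpa only [le_iff, origin_smul, label_smul, mul_le_mul_iff_left] using le_iff.1 h
  smul_le_smul_right g h hgh e := le_iff.2 (.inr ⟨rfl, mul_le_mul_left hgh e.origin⟩)
  le_of_smul_le_smul_left g e e' h := by
    simpa only [le_iff, origin_smul, label_smul, mul_le_mul_iff_left] using h
  le_of_smul_le_smul_right g h e hle := by
    simpa only [le_iff, origin_smul, label_smul, mul_le_mul_iff_right, lt_irrefl, false_or,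
      true_and] using hle

end Edge

/-! ### Independence of the Fox derivatives of a basis -/

theorem exists_equivariant_retraction {F : Type*} [Group F] (J : Subgroup F) :
    ∃ p : F → J, p 1 = 1 ∧ ∀ (k : J) f, p (k * f) = k * p f := by
  obtain ⟨T, hT, hone⟩ := J.exists_isComplement_right 1
  refine ⟨fun f => (hT.equiv f).1, ?_, fun k f => ?_⟩
  · exact congrArg Prod.fst (hT.equiv_one (one_mem J) hone)
  · exact congrArg Prod.fst (hT.equiv_mul_left k f)

variable {ι F K : Type*} [Group F] [LinearOrder F] [MulLeftMono F] [MulRightMono F] [LinearOrder ι]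
  [DivisionRing K]

/-- The map `Ψ` sends the edge from `f` to `f * b i` to the increment of `D ∘ p` along it, where
`p` is an equivariant retraction of `F` onto `J`. -/
theorem exists_linearMap_eq_of_isCrossedHom (b : FreeGroupBasis ι F)
    {d : F → HahnSeries (Edge F ι) K} (hd : IsCrossedHom (of : F →* MalcevNeumann F K) d)
    (hdb : ∀ i, d (b i) = single (.mk 1 i) 1) {J : Subgroup F} {N : Type*} [AddCommGroup N]
    [Module (MalcevNeumann J K) N] {D : J → N}
    (hD : IsCrossedHom (of : J →* MalcevNeumann J K) D) :
    ∃ Ψ : HahnSeries (Edge F ι) K →ₗ[MalcevNeumann J K] N, ∀ j : J, Ψ (d j) = D j := by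
  obtain ⟨p, hp_one, hp⟩ := exists_equivariant_retraction J
  obtain ⟨Ψ, hΨ⟩ := exists_linearMap_single (G := J) (K := K)
    (ψ := fun e : Edge F ι => D (p (e.origin * b e.label)) - D (p e.origin)) fun k e => by
      simp only [Subgroup.smul_def, Edge.origin_smul, Edge.label_smul, mul_assoc, hp, hD k _,
        smul_sub, add_sub_add_left_eq_sub]
  have increment (g : F) : ∀ f, Ψ ((of f : MalcevNeumann F K) • d g) = D (p (f * g)) - D (p f) := by
    have hg : g ∈ Subgroup.closure (Set.range b) := closure_range_freeGroupBasis b ▸ trivial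
    induction hg using Subgroup.closure_induction with
    | mem _ h =>
      obtain ⟨i, rfl⟩ := h
      intro f
      rw [hdb, of_smul_single, hΨ, Edge.origin_smul, Edge.label_smul]
      simp [Edge.mk, Edge.origin, Edge.label]
    | one => simp [hd.map_one]
    | mul g h _ _ hg hh =>
      intro f
      rw [hd, smul_add, map_add, smul_smul, ← map_mul, hg, hh, mul_assoc, add_comm,
        sub_add_sub_cancel]
    | inv g _ hg =>
      intro f
      rw [hd.map_inv, smul_neg, map_neg, smul_smul, ← map_mul, hg, inv_mul_cancel_right, neg_sub]
  refine ⟨Ψ, fun j => ?_⟩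
  have hpj : p j = j := by simpa [hp_one] using hp j 1
  simpa [hpj, hp_one, hD.map_one] using increment j 1

theorem linearIndependent_basis_of_isCrossedHom (b : FreeGroupBasis ι F)
    {d : F → HahnSeries (Edge F ι) K} (hd : IsCrossedHom (of : F →* MalcevNeumann F K) d)
    (hdb : ∀ i, d (b i) = single (.mk 1 i) 1) {J : Subgroup F} {κ : Type*}
    (c : FreeGroupBasis κ J) : LinearIndependent (MalcevNeumann J K) fun y => d (c y) := by
  classical
  obtain ⟨D, hD, hDc⟩ := exists_isCrossedHom c (of : J →* MalcevNeumann J K)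
    (Finsupp.basisSingleOne (R := MalcevNeumann J K))
  obtain ⟨Ψ, hΨ⟩ := exists_linearMap_eq_of_isCrossedHom b hd hdb hD
  have hΨc : (Ψ ∘ fun y => d (c y)) = Finsupp.basisSingleOne (R := MalcevNeumann J K) :=
    funext fun y => (hΨ (c y)).trans (hDc y)
  refine .of_comp Ψ ?_
  rw [hΨc]
  exact Module.Basis.linearIndependent _

end CayleyGraph

/-! ### Ranks -/

theorem exists_finset_card_eq_rk {G : Type*} [Group G] {H : Subgroup G}
    (hH : ∃ S : Finset G, Subgroup.closure (S : Set G) = H) :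
    ∃ S : Finset G, Subgroup.closure (S : Set G) = H ∧ S.card = H.rk := by
  obtain ⟨S, hS⟩ := hH
  exact Nat.sInf_mem
    (s := {n | ∃ S : Finset G, Subgroup.closure (S : Set G) = H ∧ S.card = n}) ⟨_, S, hS, rfl⟩

theorem exists_finset_card_le_of_freeGroupBasis {G κ : Type*} [Group G] [Finite κ] {H : Subgroup G}
    (c : FreeGroupBasis κ H) :
    ∃ S : Finset G, Subgroup.closure (S : Set G) = H ∧ S.card ≤ Nat.card κ := by
  classical
  have := Fintype.ofFinite κ
  refine ⟨Finset.univ.image (H.subtype ∘ c), ?_, ?_⟩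
  · rw [Finset.coe_image, Finset.coe_univ, Set.image_univ, Set.range_comp,
      ← MonoidHom.map_closure, closure_range_freeGroupBasis, ← MonoidHom.range_eq_map,
      Subgroup.range_subtype]
  · exact Finset.card_image_le.trans Nat.card_eq_fintype_card.ge

end HannaNeumann

open HannaNeumann HahnSeries MalcevNeumann

/-- strengthened Hanna Neumann Conjecture, Friedman–Mineyev: if `K₁, K₂`
are finitely generated nontrivial subgroups of a free group `F`, then `K₁ ⊓ K₂` is
finitely generated with `rk(K₁ ⊓ K₂) ≤ (rk(K₁) − 1)(rk(K₂) − 1) + 1`. -/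
theorem hanna_neumann {F : Type*} [Group F] [IsFreeGroup F] (K₁ K₂ : Subgroup F)
    (h₁ : K₁ ≠ ⊥) (h₂ : K₂ ≠ ⊥)
    (hfg₁ : ∃ S : Finset F, Subgroup.closure (S : Set F) = K₁)
    (hfg₂ : ∃ S : Finset F, Subgroup.closure (S : Set F) = K₂) :
    ∃ S : Finset F, Subgroup.closure (S : Set F) = K₁ ⊓ K₂ ∧
      S.card ≤ (K₁.rk - 1) * (K₂.rk - 1) + 1 := by
  classical
  obtain ⟨S₁, rfl, hS₁⟩ := exists_finset_card_eq_rk hfg₁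
  obtain ⟨S₂, rfl, hS₂⟩ := exists_finset_card_eq_rk hfg₂
  obtain ⟨_, _, _⟩ := exists_biorder F
  let _ : LinearOrder (IsFreeGroup.Generators F) := linearOrderOfSTO WellOrderingRel
  obtain ⟨d, hd, hdb⟩ := exists_isCrossedHom (IsFreeGroup.basis F)
    (of : F →* MalcevNeumann F ℚ) fun x => single (Edge.mk (1 : F) x) (1 : ℚ)
  obtain ⟨_, hlt₁⟩ := moduleFinite_cycles_and_finrank_lt_card hd h₁
  obtain ⟨_, hlt₂⟩ := moduleFinite_cycles_and_finrank_lt_card hd h₂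
  obtain ⟨_, hinf⟩ := moduleFinite_cycles_inf_and_finrank_le d (.closure S₁) (.closure S₂)
  let c := IsFreeGroup.basis ↥(Subgroup.closure (S₁ : Set F) ⊓ Subgroup.closure S₂)
  obtain ⟨_, hcard⟩ := finite_and_card_le_finrank_cycles_add_one
    (linearIndependent_basis_of_isCrossedHom (IsFreeGroup.basis F) hd hdb c)
  obtain ⟨S, hS, hSc⟩ := exists_finset_card_le_of_freeGroupBasis c
  refine ⟨S, hS, hSc.trans (hcard.trans (Nat.add_le_add_right (hinf.trans ?_) 1))⟩
  rw [← hS₁, ← hS₂]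
  exact Nat.mul_le_mul (Nat.le_sub_one_of_lt hlt₁) (Nat.le_sub_one_of_lt hlt₂)
end
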